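/- arXiv:1201.2315 — 6 statements merged into one kernel-verified Lean document; each statement's English description precedes it below -/
import Mathlib

section
/- Binary outer bound: in the binary setup, if the tuple (k=1, D=0, Δ) is achievable, then there exist u, q ∈ [0,1/2] such that Δ ≤ h₂(ε) + h₂(u) − h₂(ε⋆u) − [ β·h₂(u) − ( h₂(ζ) + h₂(q) − h₂(ζ⋆q) ) ]₊. -/
open Finset

namespace SecureSC

/-- Shannon entropy (base 2) of a finitely supported distribution `q`. -/
noncomputable def entropy {γ : Type} [Fintype γ] (q : γ → ℝ) : ℝ :=
  -∑ c, q c * Real.logb 2 (q c)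

open Classical in
/-- Pushforward of a distribution along a map. -/
noncomputable def pushf {γ α : Type} [Fintype γ] (q : γ → ℝ) (f : γ → α) : α → ℝ :=
  fun a => ∑ c, if f c = a then q c else 0

/-- Entropy `H(f)` of the random variable `f` under the joint distribution `q`. -/
noncomputable def Hof {γ α : Type} [Fintype γ] [Fintype α] (q : γ → ℝ) (f : γ → α) : ℝ :=
  entropy (pushf q f)

/-- Conditional entropy `H(f | g)` under the joint distribution `q`. -/
noncomputable def condH {γ α β : Type} [Fintype γ] [Fintype α] [Fintype β]
    (q : γ → ℝ) (f : γ → α) (g : γ → β) : ℝ :=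
  Hof q (fun c => (f c, g c)) - Hof q g

/-- Mutual information `I(f ; g)` under the joint distribution `q`. -/
noncomputable def mutInf {γ α β : Type} [Fintype γ] [Fintype α] [Fintype β]
    (q : γ → ℝ) (f : γ → α) (g : γ → β) : ℝ :=
  Hof q f + Hof q g - Hof q (fun c => (f c, g c))

/-- Conditional mutual information `I(f ; g | h)` under the joint distribution `q`. -/
noncomputable def condMutInf {γ α β δ : Type} [Fintype γ] [Fintype α] [Fintype β] [Fintype δ]
    (q : γ → ℝ) (f : γ → α) (g : γ → β) (h : γ → δ) : ℝ :=
  condH q f h - condH q f (fun c => (g c, h c))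

/-- Expectation of `φ` under the distribution `q`. -/
noncomputable def expVal {γ : Type} [Fintype γ] (q : γ → ℝ) (φ : γ → ℝ) : ℝ :=
  ∑ c, q c * φ c

/-- `q` is a probability mass function. -/
def IsPMF {γ : Type} [Fintype γ] (q : γ → ℝ) : Prop :=
  (∀ c, 0 ≤ q c) ∧ ∑ c, q c = 1

/-- `W` is a transition probability (stochastic kernel). -/
def IsKernel {α β : Type} [Fintype β] (W : α → β → ℝ) : Prop :=
  ∀ a, IsPMF (W a)

variable {A B E X Y Z : Type} [Fintype A] [Fintype B] [Fintype E]
  [Fintype X] [Fintype Y] [Fintype Z]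

/-- Component-wise mean distortion on sequences. -/
noncomputable def seqDist (d : A → A → ℝ) {n : ℕ} (a a' : Fin n → A) : ℝ :=
  (n : ℝ)⁻¹ * ∑ i, d (a i) (a' i)

/-- Joint distribution of `(Aⁿ, Bⁿ, Eⁿ, Xᵐ, Yᵐ, Zᵐ)` induced by the i.i.d. source `pS`,
the stochastic encoder `F` and the memoryless channel `Wch`. -/
noncomputable def codeJoint (pS : A × B × E → ℝ) (Wch : X → Y × Z → ℝ) {n m : ℕ}
    (F : (Fin n → A) → (Fin m → X) → ℝ) :
    (Fin n → A) × (Fin n → B) × (Fin n → E) × (Fin m → X) × (Fin m → Y) × (Fin m → Z) → ℝ :=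
  fun w =>
    (∏ i, pS (w.1 i, w.2.1 i, w.2.2.1 i)) * F w.1 w.2.2.2.1 *
      ∏ j, Wch (w.2.2.2.1 j) (w.2.2.2.2.1 j, w.2.2.2.2.2 j)

/-- A tuple `(k, D, Δ)` is achievable for the secure joint source-channel coding problem. -/
def Achievable (pS : A × B × E → ℝ) (Wch : X → Y × Z → ℝ) (d : A → A → ℝ)
    (k D Δ : ℝ) : Prop :=
  ∀ ε : ℝ, 0 < ε →
    ∃ (n m : ℕ), 0 < n ∧
      ∃ (F : (Fin n → A) → (Fin m → X) → ℝ)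
        (g : (Fin n → B) → (Fin m → Y) → Fin n → A),
        IsKernel F ∧
        (m : ℝ) / n ≤ k + ε ∧
        expVal (codeJoint pS Wch F)
          (fun w => seqDist d w.1 (g w.2.1 w.2.2.2.2.1)) ≤ D + ε ∧
        Δ - ε ≤ (n : ℝ)⁻¹ *
          condH (codeJoint pS Wch F) (fun w => w.1)
            (fun w => (w.2.2.1, w.2.2.2.2.2))

/-- The binary entropy function `h₂` (note `Real.logb 2 0 = 0`, so `h₂ 0 = h₂ 1 = 0`). -/
noncomputable def h2 (x : ℝ) : ℝ := -(x * Real.logb 2 x) - (1 - x) * Real.logb 2 (1 - x)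

/-- Binary convolution `a ⋆ b = a(1−b) + (1−a)b`. -/
def bstar (a b : ℝ) : ℝ := a * (1 - b) + (1 - a) * b

/-- Binary source with BEC/BSC side informations: `A` is uniform on `{0,1}`, `B` is the
output of a BEC with erasure probability `β` (`none` is the erasure symbol) and input `A`,
and `E` is the output of a BSC with crossover probability `ε` and input `A`, the two
channels being conditionally independent given `A`. -/
noncomputable def binSource (β ε : ℝ) : Bool × Option Bool × Bool → ℝ :=
  fun w => (1 / 2 : ℝ) *
    (if w.2.1 = none then β else if w.2.1 = some w.1 then 1 - β else 0) *
    (if w.2.2 = w.1 then 1 - ε else ε)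

/-- Type-II wiretap channel: Bob receives `Y = X` noiselessly, Eve receives `Z`, the output
of a BSC with crossover probability `ζ` and input `X`. -/
noncomputable def wiretapII (ζ : ℝ) : Bool → Bool × Bool → ℝ :=
  fun x w => (if w.1 = x then 1 else 0) * (if w.2 = x then 1 - ζ else ζ)

/-- Hamming distortion on `{0,1}`. -/
noncomputable def hamming : Bool → Bool → ℝ := fun a a' => if a = a' then 0 else 1

/-!
Write `Sⁿ` for the erasure pattern of Bob's side information and `Vⁿ` for the bit flips of Eve's.
Since these are noise, `H(Sⁿ, Vⁿ, Aⁿ | Zᵐ)` equals both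
`n h₂(β) + H(Eⁿ | Zᵐ) + H(Aⁿ | Eⁿ, Zᵐ)` and `n h₂(ε) + H(Bⁿ | Zᵐ) + H(Aⁿ | Bⁿ, Zᵐ)`.
The Csiszár sum identity with `Uᵢ = (Eⁱ⁻¹, Bᵢ₊₁ⁿ, Zᵐ)` therefore bounds the equivocation
`H(Aⁿ | Eⁿ, Zᵐ)` in two ways by `∑ᵢ (h₂(ε) + c H(Aᵢ | Uᵢ) - H(Eᵢ | Uᵢ))`: with `c = 1` directly,
and with `c = 1 - β` up to the additional term `H(Aⁿ | Bⁿ, Zᵐ)`, which is at most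
`m h₂(ζ) + H(Aⁿ | Bⁿ, Xᵐ)`, whose last summand is controlled by Fano's inequality.
If `n h₂(u) = ∑ᵢ H(Aᵢ | Uᵢ)`, then `∑ᵢ H(Eᵢ | Uᵢ) ≥ n h₂(ε ⋆ u)` by Mrs. Gerber's lemma.
Compactness of `[0, 1/2]` provides a limit of `u` as the slack of the codes tends to zero.
On the type-II channel the bound is weakest at `q = 1/2`, where
`h₂(ζ) + h₂(q) - h₂(ζ ⋆ q) = h₂(ζ)`.
-/

section BinaryEntropy

open Real

theorem h2_eq_binEntropy_div (x : ℝ) : h2 x = binEntropy x / log 2 := by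
  unfold h2
  rw [binEntropy_eq_negMulLog_add_negMulLog_one_sub]
  simp only [negMulLog, logb]
  ring

theorem continuous_h2 : Continuous h2 := by
  simpa only [funext h2_eq_binEntropy_div] using binEntropy_continuous.div_const (log 2)

theorem h2_zero : h2 0 = 0 := by simp [h2]

theorem h2_two_inv : h2 2⁻¹ = 1 := by
  rw [h2_eq_binEntropy_div, binEntropy_two_inv, div_self (log_pos one_lt_two).ne']

theorem h2_one_sub (x : ℝ) : h2 (1 - x) = h2 x := by
  rw [h2_eq_binEntropy_div, h2_eq_binEntropy_div, binEntropy_one_sub]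

theorem h2_le_one (x : ℝ) : h2 x ≤ 1 := by
  rw [h2_eq_binEntropy_div, div_le_one (log_pos one_lt_two)]
  exact binEntropy_le_log_two

theorem h2_nonneg {x : ℝ} (hx : x ∈ Set.Icc 0 1) : 0 ≤ h2 x := by
  rw [h2_eq_binEntropy_div]
  exact div_nonneg (binEntropy_nonneg hx.1 hx.2) (log_nonneg one_le_two)

theorem concaveOn_h2 : ConcaveOn ℝ (Set.Icc 0 1) h2 := by
  refine (strictConcave_binEntropy.concaveOn.smul
    (inv_nonneg.2 (log_nonneg one_le_two))).congr fun x _ => ?_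
  simp only [smul_eq_mul, h2_eq_binEntropy_div, div_eq_inv_mul]

theorem monotoneOn_h2 : MonotoneOn h2 (Set.Icc 0 2⁻¹) := fun x hx y hy hxy => by
  rw [h2_eq_binEntropy_div, h2_eq_binEntropy_div]
  exact div_le_div_of_nonneg_right (binEntropy_strictMonoOn.monotoneOn hx hy hxy)
    (log_nonneg one_le_two)

theorem h2_le_h2_min {p D : ℝ} (hp : 0 ≤ p) (hpD : p ≤ D) : h2 p ≤ h2 (min D 2⁻¹) := by
  rcases le_total D 2⁻¹ with hD | hD
  · rw [min_eq_left hD]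
    exact monotoneOn_h2 ⟨hp, hpD.trans hD⟩ ⟨hp.trans hpD, hD⟩ hpD
  · rw [min_eq_right hD, h2_two_inv]
    exact h2_le_one p

theorem exists_h2_eq {y : ℝ} (hy : y ∈ Set.Icc 0 1) : ∃ u ∈ Set.Icc (0 : ℝ) 2⁻¹, h2 u = y := by
  have := intermediate_value_Icc (by norm_num : (0 : ℝ) ≤ 2⁻¹) continuous_h2.continuousOn
  rw [h2_zero, h2_two_inv] at this
  exact this hy

end BinaryEntropy

section MrsGerber

open Real

variable {c x : ℝ}

theorem hasDerivAt_artanh (hx : x ∈ Set.Ioo (-1) 1) : HasDerivAt artanh (1 / (1 - x ^ 2)) x := by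
  have hpos : 0 < 1 + x := by linarith [hx.1]
  have hneg : 0 < 1 - x := by linarith [hx.2]
  have hlog : HasDerivAt (fun y => 1 / 2 * log ((1 + y) / (1 - y))) (1 / (1 - x ^ 2)) x := by
    have hquot := ((hasDerivAt_id x).const_add 1).div ((hasDerivAt_id x).const_sub 1) hneg.ne'
    refine ((hquot.log (div_pos hpos hneg).ne').const_mul (1 / 2)).congr_deriv ?_
    have hprod : 1 - x ^ 2 = (1 + x) * (1 - x) := by ring
    simp only [id, Pi.div_apply, hprod]
    field_simp
    ring
  refine hlog.congr_of_eventuallyEq ?_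
  filter_upwards [Ioo_mem_nhds hx.1 hx.2] with y hy
  exact artanh_eq_half_log ⟨hy.1.le, hy.2.le⟩

theorem hasDerivAt_artanh_const_mul (hx : c * x ∈ Set.Ioo (-1) 1) :
    HasDerivAt (fun y => artanh (c * y)) (c / (1 - (c * x) ^ 2)) x := by
  refine ((hasDerivAt_artanh hx).comp x ((hasDerivAt_id x).const_mul c)).congr_deriv ?_
  ring

theorem convexOn_artanh : ConvexOn ℝ (Set.Ico 0 1) artanh := by
  have hderiv : ∀ y ∈ Set.Ico (0 : ℝ) 1, HasDerivAt artanh (1 / (1 - y ^ 2)) y :=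
    fun y hy => hasDerivAt_artanh ⟨by linarith [hy.1], hy.2⟩
  refine MonotoneOn.convexOn_of_deriv (convex_Ico 0 1)
    (fun y hy => (hderiv y hy).continuousAt.continuousWithinAt)
    (fun y hy => (hderiv y (interior_subset hy)).differentiableAt.differentiableWithinAt) ?_
  intro y hy z hz hyz
  have hy := interior_subset hy
  have hz := interior_subset hz
  rw [(hderiv y hy).deriv, (hderiv z hz).deriv]
  have hsq : y ^ 2 ≤ z ^ 2 := pow_le_pow_left₀ hy.1 hyz 2
  have hz1 : z ^ 2 < 1 := pow_lt_one₀ hz.1 hz.2 two_ne_zero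
  exact one_div_le_one_div_of_le (by linarith) (by linarith)

theorem artanh_mul_le (hc : c ∈ Set.Icc 0 1) (hx : x ∈ Set.Ico 0 1) :
    artanh (c * x) ≤ c * artanh x := by
  simpa [artanh_zero] using convexOn_artanh.2 hx (Set.left_mem_Ico.2 zero_lt_one) hc.1
    (sub_nonneg.2 hc.2) (add_sub_cancel c 1)

theorem concaveOn_one_sub_sq_mul_artanh :
    ConcaveOn ℝ (Set.Ico 0 1) fun x => (1 - x ^ 2) * artanh x := by
  have hderiv : ∀ y ∈ Set.Ico (0 : ℝ) 1,
      HasDerivAt (fun x => (1 - x ^ 2) * artanh x) (1 - 2 * (y * artanh y)) y := by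
    intro y hy
    have hy' : 1 - y ^ 2 ≠ 0 := (sub_pos.2 (pow_lt_one₀ hy.1 hy.2 two_ne_zero)).ne'
    refine ((((hasDerivAt_id y).pow 2).const_sub 1).mul
      (hasDerivAt_artanh ⟨by linarith [hy.1], hy.2⟩)).congr_deriv ?_
    simp only [id, Pi.pow_apply]
    field_simp
    ring
  refine AntitoneOn.concaveOn_of_deriv (convex_Ico 0 1)
    (fun y hy => (hderiv y hy).continuousAt.continuousWithinAt)
    (fun y hy => (hderiv y (interior_subset hy)).differentiableAt.differentiableWithinAt) ?_
  intro y hy z hz hyz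
  have hy := interior_subset hy
  have hz := interior_subset hz
  rw [(hderiv y hy).deriv, (hderiv z hz).deriv]
  have hmono : y * artanh y ≤ z * artanh z :=
    mul_le_mul hyz (artanh_le_artanh (by linarith [hy.1]) hz.2 hyz) (artanh_nonneg hy.1) hz.1
  linarith

theorem const_mul_mem_Ico (hc : c ∈ Set.Icc 0 1) (hx : x ∈ Set.Ico 0 1) :
    c * x ∈ Set.Ico (0 : ℝ) 1 :=
  ⟨mul_nonneg hc.1 hx.1, (mul_le_of_le_one_left hx.1 hc.2).trans_lt hx.2⟩

theorem antitoneOn_artanh_mul_div_artanh (hc : c ∈ Set.Icc 0 1) :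
    AntitoneOn (fun x => artanh (c * x) / artanh x) (Set.Ioo 0 1) := by
  have hderiv : ∀ x ∈ Set.Ioo (0 : ℝ) 1, HasDerivAt (fun x => artanh (c * x) / artanh x)
      ((c / (1 - (c * x) ^ 2) * artanh x - artanh (c * x) * (1 / (1 - x ^ 2))) /
        artanh x ^ 2) x := by
    intro x hx
    have hcx := const_mul_mem_Ico hc (Set.Ioo_subset_Ico_self hx)
    exact (hasDerivAt_artanh_const_mul ⟨by linarith [hcx.1], hcx.2⟩).div
      (hasDerivAt_artanh ⟨by linarith [hx.1], hx.2⟩) (artanh_pos hx).ne'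
  refine antitoneOn_of_deriv_nonpos (convex_Ioo 0 1)
    (fun x hx => (hderiv x hx).continuousAt.continuousWithinAt)
    (fun x hx => (hderiv x (interior_subset hx)).differentiableAt.differentiableWithinAt) ?_
  intro x hx
  rw [(hderiv x (interior_subset hx)).deriv]
  have hx := Set.Ioo_subset_Ico_self (interior_subset hx)
  have hcx := const_mul_mem_Ico hc hx
  have hconcave : c * ((1 - x ^ 2) * artanh x) ≤ (1 - (c * x) ^ 2) * artanh (c * x) := by
    simpa [artanh_zero] using concaveOn_one_sub_sq_mul_artanh.2 hx
      (Set.left_mem_Ico.2 zero_lt_one) hc.1 (sub_nonneg.2 hc.2) (add_sub_cancel c 1)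
  refine div_nonpos_of_nonpos_of_nonneg (sub_nonpos.2 ?_) (sq_nonneg _)
  rw [div_mul_eq_mul_div, mul_one_div,
    div_le_div_iff₀ (sub_pos.2 (pow_lt_one₀ hcx.1 hcx.2 two_ne_zero))
      (sub_pos.2 (pow_lt_one₀ hx.1 hx.2 two_ne_zero))]
  linarith

theorem hasDerivAt_binEntropy_one_sub_mul_div_two (hx : c * x ∈ Set.Ioo (-1) 1) :
    HasDerivAt (fun y => binEntropy ((1 - c * y) / 2)) (-(c * artanh (c * x))) x := by
  have hinner : HasDerivAt (fun y => (1 - c * y) / 2) (-c / 2) x := by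
    simpa using (((hasDerivAt_id x).const_mul c).const_sub 1).div_const 2
  refine ((hasDerivAt_binEntropy (p := (1 - c * x) / 2) (by linarith [hx.2])
    (by linarith [hx.1])).comp x hinner).congr_deriv ?_
  have hadd : 1 + c * x ≠ 0 := by linarith [hx.1]
  have hsub : 1 - c * x ≠ 0 := (sub_pos.2 hx.2).ne'
  rw [show 1 - (1 - c * x) / 2 = (1 + c * x) / 2 by ring, log_div hadd two_ne_zero,
    log_div hsub two_ne_zero, artanh_eq_half_log ⟨hx.1.le, hx.2.le⟩, log_div hadd hsub]
  ring

theorem le_of_hasDerivAt_Ioo {f f' : ℝ → ℝ} {a b x₀ : ℝ} (hf : Continuous f)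
    (hf' : ∀ y ∈ Set.Ioo a b, HasDerivAt f (f' y) y) (hx₀ : x₀ ∈ Set.Icc a b)
    (hleft : ∀ y ∈ Set.Ioo a x₀, f' y ≤ 0) (hright : ∀ y ∈ Set.Ioo x₀ b, 0 ≤ f' y)
    (hx : x ∈ Set.Icc a b) : f x₀ ≤ f x := by
  rcases le_total x₀ x with h | h
  · have hmem : ∀ y ∈ Set.Ioo x₀ b, y ∈ Set.Ioo a b := fun y hy => ⟨hx₀.1.trans_lt hy.1, hy.2⟩
    refine monotoneOn_of_deriv_nonneg (convex_Icc x₀ b) hf.continuousOn ?_ ?_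
      ⟨le_rfl, hx₀.2⟩ ⟨h, hx.2⟩ h <;> rw [interior_Icc] <;> intro y hy
    · exact (hf' y (hmem y hy)).differentiableAt.differentiableWithinAt
    · exact (hf' y (hmem y hy)).deriv ▸ hright y hy
  · have hmem : ∀ y ∈ Set.Ioo a x₀, y ∈ Set.Ioo a b := fun y hy => ⟨hy.1, hy.2.trans_le hx₀.2⟩
    refine antitoneOn_of_deriv_nonpos (convex_Icc a x₀) hf.continuousOn ?_ ?_
      ⟨hx.1, h⟩ ⟨hx₀.1, le_rfl⟩ h <;> rw [interior_Icc] <;> intro y hy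
    · exact (hf' y (hmem y hy)).differentiableAt.differentiableWithinAt
    · exact (hf' y (hmem y hy)).deriv ▸ hleft y hy

theorem exists_slope_artanh (hc : c ∈ Set.Icc 0 1) {x₀ : ℝ} (hx₀ : x₀ ∈ Set.Icc 0 1) :
    ∃ s, (∀ y ∈ Set.Ioo 0 x₀, s * artanh y ≤ c * artanh (c * y)) ∧
      ∀ y ∈ Set.Ioo x₀ 1, c * artanh (c * y) ≤ s * artanh y := by
  have hratio : ∀ y ∈ Set.Ioo (0 : ℝ) 1, ∀ z ∈ Set.Ioo (0 : ℝ) 1, y ≤ z →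
      artanh (c * z) / artanh z ≤ artanh (c * y) / artanh y :=
    fun y hy z hz hyz => antitoneOn_artanh_mul_div_artanh hc hy hz hyz
  rcases hx₀.1.eq_or_lt with rfl | hpos
  · refine ⟨c * c, fun y hy => absurd hy.2 hy.1.not_gt, fun y hy => ?_⟩
    rw [mul_assoc]
    exact mul_le_mul_of_nonneg_left (artanh_mul_le hc ⟨hy.1.le, hy.2⟩) hc.1
  rcases hx₀.2.eq_or_lt with rfl | hlt
  · refine ⟨0, fun y hy => ?_, fun y hy => absurd hy.2 hy.1.not_gt⟩
    rw [zero_mul]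
    exact mul_nonneg hc.1 (artanh_nonneg (mul_nonneg hc.1 hy.1.le))
  refine ⟨c * (artanh (c * x₀) / artanh x₀), fun y hy => ?_, fun y hy => ?_⟩ <;> rw [mul_assoc] <;>
    refine mul_le_mul_of_nonneg_left ?_ hc.1
  · have hy1 : y ∈ Set.Ioo (0 : ℝ) 1 := ⟨hy.1, hy.2.trans hlt⟩
    exact (le_div_iff₀ (artanh_pos hy1)).1 (hratio y hy1 x₀ ⟨hpos, hlt⟩ hy.2.le)
  · have hy1 : y ∈ Set.Ioo (0 : ℝ) 1 := ⟨hpos.trans hy.1, hy.2⟩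
    exact (div_le_iff₀ (artanh_pos hy1)).1 (hratio x₀ ⟨hpos, hlt⟩ y hy1 hy.1.le)

theorem exists_tangent_binEntropy (hc : c ∈ Set.Icc 0 1) {x₀ : ℝ} (hx₀ : x₀ ∈ Set.Icc 0 1) :
    ∃ s, ∀ x ∈ Set.Icc (0 : ℝ) 1, binEntropy ((1 - c * x₀) / 2) +
      s * (binEntropy ((1 - x) / 2) - binEntropy ((1 - x₀) / 2)) ≤
        binEntropy ((1 - c * x) / 2) := by
  obtain ⟨s, hleft, hright⟩ := exists_slope_artanh hc hx₀
  refine ⟨s, fun x hx => ?_⟩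
  have hcont : Continuous fun y =>
      binEntropy ((1 - c * y) / 2) - s * binEntropy ((1 - 1 * y) / 2) := by
    have := binEntropy_continuous
    fun_prop
  have hderiv : ∀ y ∈ Set.Ioo (0 : ℝ) 1, HasDerivAt
      (fun y => binEntropy ((1 - c * y) / 2) - s * binEntropy ((1 - 1 * y) / 2))
      (s * artanh y - c * artanh (c * y)) y := by
    intro y hy
    have hcy := const_mul_mem_Ico hc (Set.Ioo_subset_Ico_self hy)
    refine ((hasDerivAt_binEntropy_one_sub_mul_div_two ⟨by linarith [hcy.1], hcy.2⟩).sub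
      ((hasDerivAt_binEntropy_one_sub_mul_div_two (c := 1) ⟨by linarith [hy.1],
        by linarith [hy.2]⟩).const_mul s)).congr_deriv ?_
    rw [one_mul, one_mul, mul_neg, sub_neg_eq_add, neg_add_eq_sub]
  have hle := le_of_hasDerivAt_Ioo hcont hderiv hx₀ (fun y hy => sub_nonpos.2 (hleft y hy))
    (fun y hy => sub_nonneg.2 (hright y hy)) hx
  simp only [one_mul] at hle
  linarith

theorem bstar_comm (a b : ℝ) : bstar a b = bstar b a := by
  unfold bstar
  ring

theorem bstar_one_sub (a b : ℝ) : bstar a (1 - b) = 1 - bstar a b := by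
  unfold bstar
  ring

theorem h2_bstar_eq_binEntropy (a b : ℝ) :
    h2 (bstar a b) = binEntropy ((1 - (1 - 2 * a) * (1 - 2 * b)) / 2) / log 2 := by
  rw [h2_eq_binEntropy_div]
  congr 2
  unfold bstar
  ring

/-- Tangent form of Mrs. Gerber's lemma: `h2 (ε ⋆ v)` is a convex function of `h2 v`. -/
theorem exists_tangent_h2_bstar {ε u : ℝ} (hε : ε ∈ Set.Icc 0 1) (hu : u ∈ Set.Icc 0 1) :
    ∃ s, ∀ v ∈ Set.Icc (0 : ℝ) 1, h2 (bstar ε u) + s * (h2 v - h2 u) ≤ h2 (bstar ε v) := by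
  wlog hε2 : ε ≤ 2⁻¹ generalizing ε
  · obtain ⟨s, hs⟩ := this (ε := 1 - ε) ⟨sub_nonneg.2 hε.2, sub_le_self 1 hε.1⟩ (by linarith)
    simp only [bstar_comm (1 - ε), bstar_one_sub, h2_one_sub] at hs
    simpa only [bstar_comm ε] using ⟨s, hs⟩
  wlog hu2 : u ≤ 2⁻¹ generalizing u
  · simpa only [bstar_one_sub, h2_one_sub] using
      this (u := 1 - u) ⟨sub_nonneg.2 hu.2, sub_le_self 1 hu.1⟩ (by linarith)
  obtain ⟨s, hs⟩ := exists_tangent_binEntropy (c := 1 - 2 * ε) (x₀ := 1 - 2 * u)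
    ⟨by linarith, by linarith [hε.1]⟩ ⟨by linarith, by linarith [hu.1]⟩
  refine ⟨s, fun v hv => ?_⟩
  wlog hv2 : v ≤ 2⁻¹ generalizing v
  · simpa only [bstar_one_sub, h2_one_sub] using
      this (1 - v) ⟨sub_nonneg.2 hv.2, sub_le_self 1 hv.1⟩ (by linarith)
  have htangent := div_le_div_of_nonneg_right (hs (1 - 2 * v) ⟨by linarith, by linarith [hv.1]⟩)
    (log_nonneg one_le_two)
  have hhalf : ∀ w : ℝ, (1 - (1 - 2 * w)) / 2 = w := fun w => by ring
  rwa [hhalf, hhalf, add_div, ← h2_bstar_eq_binEntropy, ← h2_bstar_eq_binEntropy, mul_div_assoc,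
    sub_div, ← h2_eq_binEntropy_div, ← h2_eq_binEntropy_div] at htangent

end MrsGerber

section Entropy

variable {Ω α β γ : Type} [Fintype Ω] {q : Ω → ℝ}

theorem pushf_nonneg (hq : ∀ c, 0 ≤ q c) (f : Ω → α) (a : α) : 0 ≤ pushf q f a :=
  sum_nonneg fun c _ => by split_ifs <;> [exact hq c; exact le_rfl]

theorem pushf_apply_congr (q : Ω → ℝ) {f : Ω → α} {g : Ω → β} {a : α} {b : β}
    (h : ∀ c, f c = a ↔ g c = b) : pushf q f a = pushf q g b := by
  classical
  exact sum_congr rfl fun c _ => if_congr (h c) rfl rfl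

theorem pushf_apply_of_injective (q : Ω → ℝ) {f : Ω → α} (hf : f.Injective) (c : Ω) :
    pushf q f (f c) = q c := by
  classical
  simp only [pushf, hf.eq_iff, sum_ite_eq', mem_univ, if_true]

theorem pushf_apply_of_notMem_range (q : Ω → ℝ) {f : Ω → α} {a : α} (ha : a ∉ Set.range f) :
    pushf q f a = 0 :=
  sum_eq_zero fun c _ => if_neg fun hc => ha ⟨c, hc⟩

theorem le_pushf_apply (hq : ∀ c, 0 ≤ q c) (f : Ω → α) (c : Ω) : q c ≤ pushf q f (f c) := by
  classical
  calc q c = if f c = f c then q c else 0 := (if_pos rfl).symm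
    _ ≤ pushf q f (f c) := by
      unfold pushf
      exact single_le_sum (f := fun c' => if f c' = f c then q c' else 0)
        (fun c' _ => by split_ifs <;> [exact hq c'; exact le_rfl]) (mem_univ c)

theorem pushf_le_pushf_of_factorsThrough (hq : ∀ c, 0 ≤ q c) {f : Ω → α} {g : Ω → β}
    (h : f.FactorsThrough g) (c : Ω) : pushf q g (g c) ≤ pushf q f (f c) := by
  refine sum_le_sum fun c' _ => ?_
  by_cases hg : g c' = g c
  · rw [if_pos hg, if_pos (h hg)]
  · rw [if_neg hg]
    split_ifs <;> [exact hq c'; exact le_rfl]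

theorem sum_pushf_mul [Fintype α] (q : Ω → ℝ) (f : Ω → α) (φ : α → ℝ) :
    ∑ a, pushf q f a * φ a = ∑ c, q c * φ (f c) := by
  classical
  simp only [pushf, sum_mul, ite_mul, zero_mul]
  rw [sum_comm]
  simp only [sum_ite_eq, mem_univ, if_true]

theorem sum_pushf [Fintype α] (q : Ω → ℝ) (f : Ω → α) : ∑ a, pushf q f a = ∑ c, q c := by
  simpa only [mul_one] using sum_pushf_mul q f fun _ => 1

theorem isPMF_pushf [Fintype α] (hq : IsPMF q) (f : Ω → α) : IsPMF (pushf q f) :=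
  ⟨pushf_nonneg hq.1 f, (sum_pushf q f).trans hq.2⟩

theorem IsPMF.apply_mem_Icc (hq : IsPMF q) (c : Ω) : q c ∈ Set.Icc (0 : ℝ) 1 :=
  ⟨hq.1 c, hq.2 ▸ single_le_sum (fun c' _ => hq.1 c') (mem_univ c)⟩

theorem pushf_pushf [Fintype α] (q : Ω → ℝ) (f : Ω → α) (g : α → β) :
    pushf (pushf q f) g = pushf q fun c => g (f c) := by
  classical
  funext b
  simpa only [mul_ite, mul_one, mul_zero, pushf] using
    sum_pushf_mul q f fun a => if g a = b then 1 else 0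

theorem sum_pushf_prodMk [Fintype α] (q : Ω → ℝ) (f : Ω → α) (g : Ω → β) (b : β) :
    ∑ a, pushf q (fun c => (f c, g c)) (a, b) = pushf q g b := by
  classical
  simp only [pushf, Prod.mk.injEq, ite_and]
  rw [sum_comm]
  simp only [sum_ite_eq, mem_univ, if_true]

variable [Fintype α] [Fintype β] [Fintype γ]

theorem Hof_eq_neg_sum (q : Ω → ℝ) (f : Ω → α) :
    Hof q f = -∑ c, q c * Real.logb 2 (pushf q f (f c)) := by
  rw [Hof, entropy, sum_pushf_mul q f fun a => Real.logb 2 (pushf q f a)]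

theorem Hof_pushf (q : Ω → ℝ) (f : Ω → α) (g : α → β) :
    Hof (pushf q f) g = Hof q fun c => g (f c) := by
  rw [Hof, Hof, pushf_pushf]

theorem condH_pushf (q : Ω → ℝ) (f : Ω → α) (g : α → β) (h : α → γ) :
    condH (pushf q f) g h = condH q (fun c => g (f c)) fun c => h (f c) := by
  rw [condH, condH, Hof_pushf, Hof_pushf]

theorem Hof_le_neg_sum_mul_logb (hq : IsPMF q) (f : Ω → α) {r : α → ℝ} (hr : ∀ a, 0 ≤ r a)
    (hr1 : ∑ a, r a ≤ 1) (hpos : ∀ c, 0 < q c → 0 < r (f c)) :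
    Hof q f ≤ -∑ c, q c * Real.logb 2 (r (f c)) := by
  have hterm : ∀ c, q c * (Real.log (r (f c)) - Real.log (pushf q f (f c))) ≤
      q c * (r (f c) / pushf q f (f c) - 1) := by
    intro c
    rcases (hq.1 c).eq_or_lt with hc | hc
    · simp only [← hc, zero_mul, le_refl]
    have hf := hc.trans_le (le_pushf_apply hq.1 f c)
    rw [← Real.log_div (hpos c hc).ne' hf.ne']
    exact mul_le_mul_of_nonneg_left (Real.log_le_sub_one_of_pos (div_pos (hpos c hc) hf)) hc.le
  have hratio : ∑ a, pushf q f a * (r a / pushf q f a) ≤ ∑ a, r a := by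
    refine sum_le_sum fun a _ => ?_
    rcases eq_or_ne (pushf q f a) 0 with ha | ha
    · rw [ha, zero_mul]
      exact hr a
    · rw [mul_div_cancel₀ _ ha]
  have hlog : ∑ c, q c * (Real.log (r (f c)) - Real.log (pushf q f (f c))) ≤ 0 := by
    refine (sum_le_sum fun c _ => hterm c).trans ?_
    simp only [mul_sub, mul_one, sum_sub_distrib, hq.2]
    rw [← sum_pushf_mul q f fun a => r a / pushf q f a]
    linarith
  rw [Hof_eq_neg_sum, neg_le_neg_iff]
  simp only [mul_sub, sum_sub_distrib, sub_nonpos] at hlog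
  simp only [Real.logb, ← mul_div_assoc, ← sum_div]
  exact div_le_div_of_nonneg_right hlog (Real.log_nonneg one_le_two)

theorem Hof_le_of_factorsThrough (hq : IsPMF q) {f : Ω → α} {g : Ω → β}
    (h : f.FactorsThrough g) : Hof q f ≤ Hof q g := by
  rw [Hof_eq_neg_sum, Hof_eq_neg_sum, neg_le_neg_iff]
  refine sum_le_sum fun c _ => ?_
  rcases (hq.1 c).eq_or_lt with hc | hc
  · simp only [← hc, zero_mul, le_refl]
  exact mul_le_mul_of_nonneg_left (Real.logb_le_logb_of_le one_lt_two
    (hc.trans_le (le_pushf_apply hq.1 g c)) (pushf_le_pushf_of_factorsThrough hq.1 h c)) hc.le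

theorem Hof_congr (hq : IsPMF q) {f : Ω → α} {g : Ω → β}
    (h : ∀ c c', f c = f c' ↔ g c = g c') : Hof q f = Hof q g :=
  (Hof_le_of_factorsThrough hq fun _ _ => (h _ _).2).antisymm
    (Hof_le_of_factorsThrough hq fun _ _ => (h _ _).1)

theorem condH_congr (hq : IsPMF q) {δ : Type} [Fintype δ] {f : Ω → α} {g : Ω → β} {V : Ω → γ}
    {W : Ω → δ} (hV : ∀ c c', V c = V c' ↔ W c = W c')
    (h : ∀ c c', V c = V c' → (f c = f c' ↔ g c = g c')) : condH q f V = condH q g W := by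
  refine congr_arg₂ _ (Hof_congr hq fun c c' => ?_) (Hof_congr hq hV)
  simp only [Prod.mk.injEq]
  rw [and_congr_left (h c c'), and_congr_right fun _ => hV c c']

theorem condH_nonneg (hq : IsPMF q) (f : Ω → α) (V : Ω → γ) : 0 ≤ condH q f V :=
  sub_nonneg.2 (Hof_le_of_factorsThrough hq fun _ _ h => (Prod.ext_iff.1 h).2)

theorem condH_const (hq : IsPMF q) (a : α) (V : Ω → γ) : condH q (fun _ => a) V = 0 :=
  sub_eq_zero.2 (Hof_congr hq fun c c' => by simp only [Prod.mk.injEq, true_and])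

theorem condH_prodMk (hq : IsPMF q) (f : Ω → α) (g : Ω → β) (V : Ω → γ) :
    condH q (fun c => (f c, g c)) V = condH q g V + condH q f fun c => (g c, V c) := by
  have hassoc : Hof q (fun c => ((f c, g c), V c)) = Hof q fun c => (f c, g c, V c) :=
    Hof_congr hq fun c c' => by simp only [Prod.mk.injEq, and_assoc]
  rw [condH, condH, condH, hassoc]
  ring

theorem condH_le_condH_of_factorsThrough_left (hq : IsPMF q) {f : Ω → α} {g : Ω → β} {V : Ω → γ}
    (h : f.FactorsThrough fun c => (g c, V c)) : condH q f V ≤ condH q g V := by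
  refine sub_le_sub_right (Hof_le_of_factorsThrough hq fun c c' hc => ?_) _
  exact Prod.ext (h hc) (Prod.ext_iff.1 hc).2

theorem sum_pushf_mul_pushf_div (q : Ω → ℝ) (f : Ω → α) (g : Ω → β) (V : Ω → γ) :
    ∑ x : α × β × γ, pushf q (fun c => (f c, V c)) (x.1, x.2.2) *
      pushf q (fun c => (g c, V c)) (x.2.1, x.2.2) / pushf q V x.2.2 = ∑ c, q c := by
  rw [← sum_pushf q V]
  simp only [Fintype.sum_prod_type]
  calc ∑ a, ∑ b, ∑ v, pushf q (fun c => (f c, V c)) (a, v) * pushf q (fun c => (g c, V c)) (b, v) /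
        pushf q V v
      = ∑ v, (∑ a, pushf q (fun c => (f c, V c)) (a, v)) *
          (∑ b, pushf q (fun c => (g c, V c)) (b, v)) / pushf q V v := by
        simp only [sum_mul_sum, sum_div]
        rw [sum_comm (s := (univ : Finset γ))]
        exact sum_congr rfl fun a _ => sum_comm
    _ = ∑ v, pushf q V v := by simp only [sum_pushf_prodMk, mul_self_div_self]

theorem condH_prodMk_right_le (hq : IsPMF q) (f : Ω → α) (g : Ω → β) (V : Ω → γ) :
    condH q f (fun c => (g c, V c)) ≤ condH q f V := by
  have hf : ∀ c, 0 < q c → 0 < pushf q (fun c => (f c, V c)) (f c, V c) :=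
    fun c hc => hc.trans_le (le_pushf_apply hq.1 (fun c => (f c, V c)) c)
  have hg : ∀ c, 0 < q c → 0 < pushf q (fun c => (g c, V c)) (g c, V c) :=
    fun c hc => hc.trans_le (le_pushf_apply hq.1 (fun c => (g c, V c)) c)
  have hV : ∀ c, 0 < q c → 0 < pushf q V (V c) :=
    fun c hc => hc.trans_le (le_pushf_apply hq.1 V c)
  have hgibbs := Hof_le_neg_sum_mul_logb hq (fun c => (f c, g c, V c))
    (fun x => div_nonneg (mul_nonneg (pushf_nonneg hq.1 _ _) (pushf_nonneg hq.1 _ _))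
      (pushf_nonneg hq.1 V _)) ((sum_pushf_mul_pushf_div q f g V).trans hq.2).le
    fun c hc => div_pos (mul_pos (hf c hc) (hg c hc)) (hV c hc)
  have hlog : ∀ c, q c * Real.logb 2 (pushf q (fun c => (f c, V c)) (f c, V c) *
      pushf q (fun c => (g c, V c)) (g c, V c) / pushf q V (V c)) =
        q c * Real.logb 2 (pushf q (fun c => (f c, V c)) (f c, V c)) +
        q c * Real.logb 2 (pushf q (fun c => (g c, V c)) (g c, V c)) -
        q c * Real.logb 2 (pushf q V (V c)) := by
    intro c
    rcases (hq.1 c).eq_or_lt with hc | hc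
    · simp only [← hc, zero_mul, add_zero, sub_zero]
    · rw [Real.logb_div (mul_pos (hf c hc) (hg c hc)).ne' (hV c hc).ne',
        Real.logb_mul (hf c hc).ne' (hg c hc).ne']
      ring
  simp only [hlog, sum_sub_distrib, sum_add_distrib] at hgibbs
  rw [condH, condH, Hof_eq_neg_sum q V, Hof_eq_neg_sum q fun c => (f c, V c),
    Hof_eq_neg_sum q fun c => (g c, V c)]
  linarith

theorem condH_le_condH_of_factorsThrough_right (hq : IsPMF q) (f : Ω → α) {V : Ω → β} {W : Ω → γ}
    (h : V.FactorsThrough W) : condH q f W ≤ condH q f V := by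
  have hcongr : condH q f W = condH q f fun c => (W c, V c) := condH_congr hq
    (fun c c' => by simpa only [Prod.mk.injEq, iff_self_and] using @h c c') fun _ _ _ => Iff.rfl
  exact hcongr.trans_le (condH_prodMk_right_le hq f W V)

theorem condH_sub_condH_le_of_factorsThrough (hq : IsPMF q) {δ : Type} [Fintype δ] {f : Ω → α}
    {g : Ω → β} {V : Ω → γ} {W : Ω → δ} (hg : g.FactorsThrough f) (hV : V.FactorsThrough W) :
    condH q f W - condH q g W ≤ condH q f V - condH q g V := by
  have hchain : ∀ {κ : Type} [Fintype κ] (T : Ω → κ),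
      condH q f T - condH q g T = condH q f fun c => (g c, T c) := by
    intro κ _ T
    rw [← add_sub_cancel_left (condH q g T) (condH q f fun c => (g c, T c)), ← condH_prodMk hq]
    congr 1
    refine condH_congr hq (fun _ _ => Iff.rfl) fun c c' _ => ?_
    simpa only [Prod.mk.injEq, iff_self_and] using @hg c c'
  rw [hchain, hchain]
  refine condH_le_condH_of_factorsThrough_right hq f fun c c' h => ?_
  simp only [Prod.mk.injEq] at h ⊢
  exact ⟨h.1, hV h.2⟩

theorem condH_le_Hof (hq : IsPMF q) (f : Ω → α) (V : Ω → β) : condH q f V ≤ Hof q f := by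
  have hconst : Hof q (fun _ => ()) = 0 := by simp [Hof_eq_neg_sum, pushf, hq.2]
  calc condH q f V ≤ condH q f fun _ => () :=
        condH_le_condH_of_factorsThrough_right hq f fun _ _ _ => rfl
    _ = Hof q f := by
        rw [condH, hconst, sub_zero]
        exact Hof_congr hq fun c c' => by simp only [Prod.mk.injEq, and_true]

end Entropy

section BinaryVariables

variable {Ω α : Type} [Fintype Ω] {q : Ω → ℝ}

theorem Hof_bool (hq : IsPMF q) (b : Ω → Bool) : Hof q b = h2 (pushf q b true) := by
  have htotal := (sum_pushf q b).trans hq.2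
  rw [Fintype.sum_bool] at htotal
  rw [Hof, entropy, h2, Fintype.sum_bool, eq_sub_of_add_eq' htotal]
  ring

/-- The conditional probability `P(b = true | V = v)`; it is `0` where `V = v` has probability
zero. -/
noncomputable def condProb (q : Ω → ℝ) (b : Ω → Bool) (V : Ω → α) (v : α) : ℝ :=
  pushf q (fun c => (b c, V c)) (true, v) / pushf q V v

theorem pushf_prodMk_true_add_false (q : Ω → ℝ) (b : Ω → Bool) (V : Ω → α) (v : α) :
    pushf q (fun c => (b c, V c)) (true, v) + pushf q (fun c => (b c, V c)) (false, v) =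
      pushf q V v := by
  rw [← sum_pushf_prodMk q b V v, Fintype.sum_bool]

theorem condProb_mem_Icc (hq : ∀ c, 0 ≤ q c) (b : Ω → Bool) (V : Ω → α) (v : α) :
    condProb q b V v ∈ Set.Icc (0 : ℝ) 1 := by
  refine ⟨div_nonneg (pushf_nonneg hq _ _) (pushf_nonneg hq _ _),
    div_le_one_of_le₀ ?_ (pushf_nonneg hq _ _)⟩
  rw [← pushf_prodMk_true_add_false q b V v]
  exact le_add_of_nonneg_right (pushf_nonneg hq _ _)

theorem add_mul_h2_div_add {x y : ℝ} (hx : 0 ≤ x) (hy : 0 ≤ y) :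
    (x + y) * h2 (x / (x + y)) = (x + y) * Real.logb 2 (x + y) -
      (x * Real.logb 2 x + y * Real.logb 2 y) := by
  rcases (add_nonneg hx hy).eq_or_lt with h | h
  · obtain ⟨rfl, rfl⟩ := (add_eq_zero_iff_of_nonneg hx hy).1 h.symm
    simp
  have hcompl : 1 - x / (x + y) = y / (x + y) := by
    rw [one_sub_div h.ne', add_sub_cancel_left]
  have hterm : ∀ z, (x + y) * (z / (x + y) * Real.logb 2 (z / (x + y))) =
      z * Real.logb 2 z - z * Real.logb 2 (x + y) := by
    intro z
    rcases eq_or_ne z 0 with rfl | hz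
    · simp only [zero_div, zero_mul, mul_zero, sub_zero]
    · rw [Real.logb_div hz h.ne', ← mul_assoc, mul_div_cancel₀ _ h.ne', mul_sub]
  rw [h2, hcompl, mul_sub, mul_neg, hterm, hterm]
  ring

variable [Fintype α]

theorem condH_bool_eq_sum (hq : ∀ c, 0 ≤ q c) (b : Ω → Bool) (V : Ω → α) :
    condH q b V = ∑ v, pushf q V v * h2 (condProb q b V v) := by
  simp only [condProb, ← pushf_prodMk_true_add_false q b V,
    add_mul_h2_div_add (pushf_nonneg hq _ _) (pushf_nonneg hq _ _)]
  simp only [pushf_prodMk_true_add_false, sum_sub_distrib, sum_add_distrib]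
  rw [condH, Hof, Hof, entropy, entropy, Fintype.sum_prod_type, Fintype.sum_bool]
  ring

theorem condH_bool_mem_Icc (hq : IsPMF q) (b : Ω → Bool) (V : Ω → α) :
    condH q b V ∈ Set.Icc (0 : ℝ) 1 :=
  ⟨condH_nonneg hq b V, (condH_le_Hof hq b V).trans ((Hof_bool hq b).trans_le (h2_le_one _))⟩

end BinaryVariables

section CsiszarSum

variable {Ω α β γ : Type} {n : ℕ}

/-- The conditioning `(f₁, …, fᵢ₋₁, gᵢ₊₁, …, gₙ, V)` of the Csiszár sum identity. -/
def pastFuture (f : Ω → Fin n → α) (g : Ω → Fin n → β) (V : Ω → γ) (i : Fin n) (c : Ω) :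
    ({j // j < i} → α) × ({j // i < j} → β) × γ :=
  (fun j => f c j, fun j => g c j, V c)

theorem pastFuture_eq_iff {f : Ω → Fin n → α} {g : Ω → Fin n → β} {V : Ω → γ} {i : Fin n}
    {c c' : Ω} : pastFuture f g V i c = pastFuture f g V i c' ↔
      (∀ j < i, f c j = f c' j) ∧ (∀ j, i < j → g c j = g c' j) ∧ V c = V c' := by
  simp only [pastFuture, Prod.mk.injEq, funext_iff, Subtype.forall]

/-- The sequence `(f₁, …, f_k, g_{k+1}, …, gₙ)` interpolating between `g` and `f`. -/
def hybrid (f : Ω → Fin n → α) (g : Ω → Fin n → β) (k : ℕ) (c : Ω) (j : Fin n) : α ⊕ β :=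
  if (j : ℕ) < k then Sum.inl (f c j) else Sum.inr (g c j)

theorem hybrid_eq_iff {f : Ω → Fin n → α} {g : Ω → Fin n → β} {k : ℕ} {c c' : Ω} :
    hybrid f g k c = hybrid f g k c' ↔
      (∀ j : Fin n, (j : ℕ) < k → f c j = f c' j) ∧ ∀ j : Fin n, k ≤ j → g c j = g c' j := by
  simp only [hybrid, funext_iff, ← forall_and]
  refine forall_congr' fun j => ?_
  by_cases hj : (j : ℕ) < k
  · simp [hj]
  · simp [hj, not_lt.1 hj]

variable [Fintype Ω] [Fintype α] [Fintype β] [Fintype γ] {q : Ω → ℝ}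

theorem Hof_hybrid_sub_Hof_hybrid_succ (hq : IsPMF q) (f : Ω → Fin n → α) (g : Ω → Fin n → β)
    (V : Ω → γ) (i : Fin n) :
    Hof q (fun c => (hybrid f g i c, V c)) - Hof q (fun c => (hybrid f g (i + 1) c, V c)) =
      condH q (fun c => g c i) (pastFuture f g V i) -
        condH q (fun c => f c i) (pastFuture f g V i) := by
  have hg : Hof q (fun c => (hybrid f g i c, V c)) =
      Hof q fun c => (g c i, pastFuture f g V i c) := by
    refine Hof_congr hq fun c c' => ?_
    simp only [Prod.mk.injEq, hybrid_eq_iff, pastFuture_eq_iff, le_iff_eq_or_lt, Fin.val_fin_lt,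
      ← Fin.ext_iff]
    grind
  have hf : Hof q (fun c => (hybrid f g (i + 1) c, V c)) =
      Hof q fun c => (f c i, pastFuture f g V i c) := by
    refine Hof_congr hq fun c c' => ?_
    simp only [Prod.mk.injEq, hybrid_eq_iff, pastFuture_eq_iff, Nat.lt_succ_iff, le_iff_eq_or_lt,
      Fin.val_fin_lt, ← Fin.ext_iff]
    grind
  rw [hg, hf, condH, condH]
  ring

/-- **Csiszár sum identity.** -/
theorem condH_sub_condH_eq_sum (hq : IsPMF q) (f : Ω → Fin n → α) (g : Ω → Fin n → β)
    (V : Ω → γ) :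
    condH q g V - condH q f V = ∑ i, (condH q (fun c => g c i) (pastFuture f g V i) -
      condH q (fun c => f c i) (pastFuture f g V i)) := by
  have hzero : Hof q (fun c => (hybrid f g 0 c, V c)) = Hof q fun c => (g c, V c) :=
    Hof_congr hq fun c c' => by
      simp only [Prod.mk.injEq, hybrid_eq_iff]
      simp [funext_iff]
  have hlast : Hof q (fun c => (hybrid f g n c, V c)) = Hof q fun c => (f c, V c) :=
    Hof_congr hq fun c c' => by
      simp only [Prod.mk.injEq, hybrid_eq_iff]
      simp [funext_iff]
  simp only [← Hof_hybrid_sub_Hof_hybrid_succ hq]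
  rw [Fin.sum_univ_eq_sum_range (fun k => Hof q (fun c => (hybrid f g k c, V c)) -
    Hof q (fun c => (hybrid f g (k + 1) c, V c))), sum_range_sub', hzero, hlast, condH, condH]
  ring

theorem condH_le_sum_Hof (hq : IsPMF q) (f : Ω → Fin n → α) (V : Ω → γ) :
    condH q f V ≤ ∑ i, Hof q fun c => f c i := by
  have hsum := condH_sub_condH_eq_sum hq (fun _ _ => ()) f V
  simp only [condH_const hq, sub_zero] at hsum
  rw [hsum]
  exact sum_le_sum fun i _ => condH_le_Hof hq _ _

theorem condH_le_sum_Hof_of_factorsThrough (hq : IsPMF q) {f : Ω → α} {b : Ω → Fin n → β}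
    {V : Ω → γ} (h : f.FactorsThrough fun c => (b c, V c)) :
    condH q f V ≤ ∑ i, Hof q fun c => b c i :=
  (condH_le_condH_of_factorsThrough_left hq h).trans (condH_le_sum_Hof hq b V)

end CsiszarSum

section Fano

variable {Ω γ : Type} [Fintype Ω] [Fintype γ] {q : Ω → ℝ} {n : ℕ}

theorem expVal_seqDist_hamming (q : Ω → ℝ) (a a' : Ω → Fin n → Bool) :
    expVal q (fun c => seqDist hamming (a c) (a' c)) =
      (n : ℝ)⁻¹ * ∑ i, pushf q (fun c => xor (a c i) (a' c i)) true := by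
  simp only [expVal, seqDist, pushf, mul_left_comm _ (n : ℝ)⁻¹, ← mul_sum]
  congr 1
  rw [sum_comm]
  refine sum_congr rfl fun c _ => ?_
  rw [mul_sum]
  refine sum_congr rfl fun i _ => ?_
  by_cases h : a c i = a' c i <;> simp [hamming, h]

theorem expVal_seqDist_hamming_nonneg (hq : IsPMF q) (a a' : Ω → Fin n → Bool) :
    0 ≤ expVal q fun c => seqDist hamming (a c) (a' c) := by
  rw [expVal_seqDist_hamming]
  exact mul_nonneg (inv_nonneg.2 n.cast_nonneg) (sum_nonneg fun i _ => pushf_nonneg hq.1 _ _)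

/-- **Fano's inequality** for the average bit-error probability. -/
theorem condH_le_mul_h2_expVal (hq : IsPMF q) (hn : 0 < n) (a : Ω → Fin n → Bool) (V : Ω → γ)
    (g : γ → Fin n → Bool) :
    condH q a V ≤ n * h2 (expVal q fun c => seqDist hamming (a c) (g (V c))) := by
  have hn' : (n : ℝ) ≠ 0 := Nat.cast_ne_zero.2 hn.ne'
  have hfactor : a.FactorsThrough fun c => (fun i => xor (a c i) (g (V c) i), V c) := by
    intro c c' h
    simp only [Prod.mk.injEq, funext_iff] at h
    funext i
    simpa only [h.2, Bool.xor_left_inj] using h.1 i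
  have hjensen := concaveOn_h2.le_map_sum (t := univ) (w := fun _ : Fin n => (n : ℝ)⁻¹)
    (p := fun i => pushf q (fun c => xor (a c i) (g (V c) i)) true)
    (fun i _ => by positivity) (by simp [hn']) fun i _ => (isPMF_pushf hq _).apply_mem_Icc true
  simp only [smul_eq_mul, ← mul_sum] at hjensen
  calc condH q a V ≤ ∑ i, Hof q fun c => xor (a c i) (g (V c) i) :=
        condH_le_sum_Hof_of_factorsThrough hq hfactor
    _ = n * ((n : ℝ)⁻¹ * ∑ i, h2 (pushf q (fun c => xor (a c i) (g (V c) i)) true)) := by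
        rw [mul_inv_cancel_left₀ hn']
        simp only [Hof_bool hq]
    _ ≤ n * h2 (expVal q fun c => seqDist hamming (a c) (g (V c))) := by
        rw [expVal_seqDist_hamming]
        exact mul_le_mul_of_nonneg_left hjensen n.cast_nonneg

end Fano

section Bernoulli

variable {Ω α β : Type} [Fintype Ω] {q : Ω → ℝ} {p : ℝ}

/-- The Bernoulli distribution with `P(true) = p`. -/
def bernoulliMass (p : ℝ) (b : Bool) : ℝ :=
  if b then p else 1 - p

theorem bernoulliMass_add_not (p : ℝ) (b : Bool) :
    bernoulliMass p b + bernoulliMass p (!b) = 1 := by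
  cases b <;> simp [bernoulliMass]

/-- Under `q`, the bit `b` has law `bernoulliMass p` and is independent of `V`. -/
def IsIndepBernoulli (q : Ω → ℝ) (b : Ω → Bool) (V : Ω → α) (p : ℝ) : Prop :=
  ∀ t v, pushf q (fun c => (b c, V c)) (t, v) = bernoulliMass p t * pushf q V v

variable {b : Ω → Bool} {V : Ω → α}

theorem IsIndepBernoulli.of_factorsThrough [Finite α] (h : IsIndepBernoulli q b V p)
    {W : Ω → β} (hW : W.FactorsThrough V) : IsIndepBernoulli q b W p := by
  classical
  cases nonempty_fintype α
  intro t w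
  cases isEmpty_or_nonempty β
  · exact isEmptyElim w
  obtain ⟨φ, rfl⟩ := (Function.factorsThrough_iff W).1 hW
  calc pushf q (fun c => (b c, φ (V c))) (t, w)
      = ∑ v, if φ v = w then pushf q (fun c => (b c, V c)) (t, v) else 0 := by
        rw [← pushf_pushf q (fun c => (b c, V c)) fun x => (x.1, φ x.2), pushf,
          Fintype.sum_prod_type]
        simp only [Prod.mk.injEq, ite_and]
        rw [sum_comm]
        simp only [sum_ite_eq', mem_univ, if_true]
    _ = bernoulliMass p t * ∑ v, if φ v = w then pushf q V v else 0 := by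
        rw [mul_sum]
        refine sum_congr rfl fun v _ => ?_
        rw [h, mul_ite, mul_zero]
    _ = bernoulliMass p t * pushf q (φ ∘ V) w := by
        rw [Function.comp_def, ← pushf_pushf q V φ, pushf]

theorem isIndepBernoulli_of_involutive {τ : Ω → Ω} (hτ : τ.Involutive)
    (hb : ∀ c, b (τ c) = !b c) (hV : ∀ c, V (τ c) = V c)
    (hq : ∀ c, q (τ c) * bernoulliMass p (b c) = q c * bernoulliMass p (!b c)) :
    IsIndepBernoulli q b V p := by
  classical
  intro t v
  have hflip : pushf q (fun c => (b c, V c)) (t, v) * bernoulliMass p (!t) =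
      pushf q (fun c => (b c, V c)) (!t, v) * bernoulliMass p t := by
    simp only [pushf, sum_mul]
    rw [← Equiv.sum_comp hτ.toPerm]
    refine sum_congr rfl fun c _ => ?_
    have hweight := hq c
    simp only [Function.Involutive.coe_toPerm, hb, hV, Prod.mk.injEq]
    by_cases hc : (!b c) = t ∧ V c = v
    · obtain ⟨rfl, rfl⟩ := hc
      simpa using hweight
    · rw [if_neg hc, if_neg (by rintro ⟨h, h'⟩; exact hc ⟨by simp [h], h'⟩), zero_mul, zero_mul]
  have htotal : pushf q (fun c => (b c, V c)) (t, v) + pushf q (fun c => (b c, V c)) (!t, v) =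
      pushf q V v := by
    rw [← pushf_prodMk_true_add_false q b V v]
    cases t
    · exact add_comm _ _
    · rfl
  calc pushf q (fun c => (b c, V c)) (t, v)
      = pushf q (fun c => (b c, V c)) (t, v) * (bernoulliMass p t + bernoulliMass p (!t)) := by
        rw [bernoulliMass_add_not, mul_one]
    _ = bernoulliMass p t * pushf q V v := by
        rw [mul_add, hflip, ← htotal]
        ring

theorem IsIndepBernoulli.pushf_true [Finite α] (h : IsIndepBernoulli q b V p) (hq : IsPMF q) :
    pushf q b true = p := by
  have hunit := h.of_factorsThrough (W := fun _ => ()) (fun _ _ _ => rfl) true ()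
  calc pushf q b true = pushf q (fun c => (b c, ())) (true, ()) :=
        pushf_apply_congr q fun c => by simp
    _ = p * pushf q (fun _ => ()) () := hunit
    _ = p := by simp [pushf, hq.2]

theorem IsIndepBernoulli.condProb_eq (h : IsIndepBernoulli q b V p) {v : α}
    (hv : pushf q V v ≠ 0) : condProb q b V v = p := by
  rw [condProb, h, mul_div_cancel_right₀ _ hv]
  rfl

theorem IsIndepBernoulli.condH_eq [Fintype α] (h : IsIndepBernoulli q b V p) (hq : IsPMF q) :
    condH q b V = h2 p := by
  rw [condH_bool_eq_sum hq.1]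
  calc ∑ v, pushf q V v * h2 (condProb q b V v) = ∑ v, pushf q V v * h2 p := by
        refine sum_congr rfl fun v _ => ?_
        rcases eq_or_ne (pushf q V v) 0 with hv | hv
        · rw [hv, zero_mul, zero_mul]
        · rw [h.condProb_eq hv]
    _ = h2 p := by rw [← sum_mul, sum_pushf, hq.2, one_mul]

theorem Hof_eq_sum_negMulLog [Fintype α] (q : Ω → ℝ) (f : Ω → α) :
    Hof q f = (∑ a, (pushf q f a).negMulLog) / Real.log 2 := by
  simp only [Hof, entropy, Real.negMulLog, Real.logb, neg_mul, sum_neg_distrib, neg_div, sum_div,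
    mul_div_assoc]

theorem IsIndepBernoulli.condH_erase [Fintype α] [Fintype β] (hq : IsPMF q) {a : Ω → β}
    (h : IsIndepBernoulli q b (fun c => (a c, V c)) p) :
    condH q (fun c => if b c then none else some (a c)) V = h2 p + (1 - p) * condH q a V := by
  have hV : IsIndepBernoulli q b V p := h.of_factorsThrough fun _ _ h => (Prod.ext_iff.1 h).2
  have hnone : ∀ v, pushf q (fun c => (if b c then none else some (a c), V c)) (none, v) =
      p * pushf q V v := by
    intro v
    rw [← show bernoulliMass p true = p from rfl, ← hV]
    refine pushf_apply_congr q fun c => ?_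
    cases b c <;> simp
  have hsome : ∀ x v, pushf q (fun c => (if b c then none else some (a c), V c)) (some x, v) =
      (1 - p) * pushf q (fun c => (a c, V c)) (x, v) := by
    intro x v
    rw [← show bernoulliMass p false = 1 - p from rfl, ← h]
    refine pushf_apply_congr q fun c => ?_
    cases b c <;> simp
  have hHof : Hof q (fun c => (if b c then none else some (a c), V c)) =
      h2 p + p * Hof q V + (1 - p) * Hof q fun c => (a c, V c) := by
    simp only [Hof_eq_sum_negMulLog, h2_eq_binEntropy_div,
      Real.binEntropy_eq_negMulLog_add_negMulLog_one_sub]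
    have htotal := (sum_pushf q fun c => (a c, V c)).trans hq.2
    rw [Fintype.sum_prod_type] at htotal
    rw [Fintype.sum_prod_type, Fintype.sum_option, Fintype.sum_prod_type]
    simp only [hnone, hsome, Real.negMulLog_mul, sum_add_distrib, ← mul_sum, ← sum_mul, sum_pushf,
      hq.2, htotal]
    ring
  rw [condH, condH, hHof]
  ring

end Bernoulli

section MrsGerberConditional

variable {Ω α : Type} [Fintype Ω] {q : Ω → ℝ} {ε : ℝ}

theorem IsIndepBernoulli.condProb_xor {a b : Ω → Bool} {V : Ω → α}
    (h : IsIndepBernoulli q b (fun c => (a c, V c)) ε) {v : α} (hv : pushf q V v ≠ 0) :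
    condProb q (fun c => xor (a c) (b c)) V v = bstar ε (condProb q a V v) := by
  classical
  have hxor : pushf q (fun c => (xor (a c) (b c), V c)) (true, v) =
      pushf q (fun c => (b c, a c, V c)) (true, false, v) +
        pushf q (fun c => (b c, a c, V c)) (false, true, v) := by
    simp only [pushf, ← sum_add_distrib]
    refine sum_congr rfl fun c _ => ?_
    rcases Bool.eq_false_or_eq_true (a c) with ha | ha <;>
      rcases Bool.eq_false_or_eq_true (b c) with hb | hb <;> simp [ha, hb]
  have hfalse : pushf q (fun c => (a c, V c)) (false, v) =
      pushf q V v - pushf q (fun c => (a c, V c)) (true, v) :=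
    eq_sub_of_add_eq' (pushf_prodMk_true_add_false q a V v)
  rw [condProb, condProb, hxor, h, h, hfalse, bstar, bernoulliMass, bernoulliMass]
  field_simp
  simp
  ring

variable [Fintype α]

theorem IsIndepBernoulli.add_mul_condH_le_condH_xor (hq : IsPMF q) {a b : Ω → Bool} {V : Ω → α}
    (h : IsIndepBernoulli q b (fun c => (a c, V c)) ε) {κ s : ℝ}
    (hs : ∀ v ∈ Set.Icc (0 : ℝ) 1, κ + s * h2 v ≤ h2 (bstar ε v)) :
    κ + s * condH q a V ≤ condH q (fun c => xor (a c) (b c)) V := by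
  rw [condH_bool_eq_sum hq.1, condH_bool_eq_sum hq.1]
  calc κ + s * ∑ v, pushf q V v * h2 (condProb q a V v)
      = ∑ v, pushf q V v * (κ + s * h2 (condProb q a V v)) := by
        simp only [mul_add, sum_add_distrib, ← sum_mul, sum_pushf, hq.2, one_mul, mul_sum,
          mul_left_comm s]
    _ ≤ ∑ v, pushf q V v * h2 (condProb q (fun c => xor (a c) (b c)) V v) := by
        refine sum_le_sum fun v _ => ?_
        rcases (pushf_nonneg hq.1 V v).eq_or_lt with hv | hv
        · rw [← hv, zero_mul, zero_mul]
        · rw [h.condProb_xor hv.ne']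
          exact mul_le_mul_of_nonneg_left (hs _ (condProb_mem_Icc hq.1 a V v)) hv.le

/-- **Mrs. Gerber's lemma**, averaged over finitely many conditional binary entropies. -/
theorem card_mul_h2_bstar_le_sum_condH {ι : Type} [Fintype ι] {γ : ι → Type}
    [∀ i, Fintype (γ i)] (hq : IsPMF q) (hε : ε ∈ Set.Icc 0 1) {a b : Ω → ι → Bool}
    {V : ∀ i, Ω → γ i} (h : ∀ i, IsIndepBernoulli q (fun c => b c i) (fun c => (a c i, V i c)) ε)
    {u : ℝ} (hu : u ∈ Set.Icc 0 1)
    (hsum : ∑ i, condH q (fun c => a c i) (V i) = Fintype.card ι * h2 u) :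
    Fintype.card ι * h2 (bstar ε u) ≤ ∑ i, condH q (fun c => xor (a c i) (b c i)) (V i) := by
  obtain ⟨s, hs⟩ := exists_tangent_h2_bstar hε hu
  calc Fintype.card ι * h2 (bstar ε u)
      = ∑ i, (h2 (bstar ε u) - s * h2 u + s * condH q (fun c => a c i) (V i)) := by
        rw [sum_add_distrib, ← mul_sum, hsum, sum_const, nsmul_eq_mul, card_univ]
        ring
    _ ≤ ∑ i, condH q (fun c => xor (a c i) (b c i)) (V i) :=
        sum_le_sum fun i _ => (h i).add_mul_condH_le_condH_xor hq fun v hv => by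
          linarith [hs v hv]

end MrsGerberConditional

section IIDNoise

variable {Ω α : Type} [Fintype Ω] {q : Ω → ℝ} {n : ℕ} {N : Ω → Fin n → Bool} {V : Ω → α} {p : ℝ}

/-- Under `q`, the bits `N` are i.i.d. Bernoulli with parameter `p` and independent of `V`, in the
form used here: each bit is an independent Bernoulli bit given `V` and all the others. -/
def IsIIDNoise (q : Ω → ℝ) (N : Ω → Fin n → Bool) (V : Ω → α) (p : ℝ) : Prop :=
  ∀ i, IsIndepBernoulli q (fun c => N c i) (fun c => (fun j : {j // j ≠ i} => N c j, V c)) p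

theorem IsIIDNoise.of_factorsThrough {β : Type} [Finite α] (h : IsIIDNoise q N V p) {W : Ω → β}
    (hW : W.FactorsThrough V) : IsIIDNoise q N W p := fun i =>
  (h i).of_factorsThrough fun _ _ hc => by
    simp only [Prod.mk.injEq] at hc
    exact Prod.ext hc.1 (hW hc.2)

theorem IsIIDNoise.condH_eq [Fintype α] (h : IsIIDNoise q N V p) (hq : IsPMF q) :
    condH q N V = n * h2 p := by
  have hstep : ∀ i, condH q (fun c => N c i) (pastFuture (fun _ _ => ()) N V i) = h2 p := by
    refine fun i => ((h i).of_factorsThrough fun c c' hc => ?_).condH_eq hq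
    simp only [Prod.mk.injEq, funext_iff, Subtype.forall] at hc
    exact pastFuture_eq_iff.2 ⟨fun _ _ => rfl, fun j hj => hc.1 j hj.ne', hc.2⟩
  have hsum := condH_sub_condH_eq_sum hq (fun _ _ => ()) N V
  simpa [condH_const hq, hstep] using hsum

end IIDNoise

/-- The random variables behind a code for the binary setup, on an arbitrary finite probability
space: the source bits, the noises that produce the side informations of Bob and Eve from them, the
channel input, and the noise of Eve's channel. -/
structure BinaryModel (Ω : Type) [Fintype Ω] (n m : ℕ) (β ε ζ : ℝ) where
  q : Ω → ℝ
  bit : Ω → Fin n → Bool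
  erasure : Ω → Fin n → Bool
  flip : Ω → Fin n → Bool
  input : Ω → Fin m → Bool
  channelFlip : Ω → Fin m → Bool
  isPMF : IsPMF q
  isIIDNoise_erasure :
    IsIIDNoise q erasure (fun c => (bit c, flip c, input c, channelFlip c)) β
  isIIDNoise_flip :
    IsIIDNoise q flip (fun c => (bit c, erasure c, input c, channelFlip c)) ε
  isIIDNoise_channelFlip :
    IsIIDNoise q channelFlip (fun c => (bit c, erasure c, flip c, input c)) ζ

namespace BinaryModel

variable {Ω : Type} [Fintype Ω] {n m : ℕ} {β ε ζ : ℝ} (M : BinaryModel Ω n m β ε ζ)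

/-- Bob's side information `Bⁿ`. -/
def bobSide (c : Ω) (i : Fin n) : Option Bool :=
  if M.erasure c i then none else some (M.bit c i)

/-- Eve's side information `Eⁿ`. -/
def eveSide (c : Ω) (i : Fin n) : Bool :=
  xor (M.bit c i) (M.flip c i)

/-- Eve's channel output `Zᵐ`. -/
def eveOutput (c : Ω) (j : Fin m) : Bool :=
  xor (M.input c j) (M.channelFlip c j)

/-- The `i`-th letter of the source with its two noises, equivalent to `(Aᵢ, Bᵢ, Eᵢ)`. -/
def letter (c : Ω) (i : Fin n) : Bool × Bool × Bool :=
  (M.erasure c i, M.flip c i, M.bit c i)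

/-- The auxiliary random variable `Uᵢ = (Eⁱ⁻¹, Bᵢ₊₁ⁿ, Zᵐ)` of the single-letterization. -/
abbrev aux (i : Fin n) :=
  pastFuture M.eveSide M.bobSide M.eveOutput i

theorem eveOutput_factorsThrough :
    M.eveOutput.FactorsThrough fun c => (M.input c, M.channelFlip c) := fun c c' h => by
  simp only [Prod.mk.injEq] at h
  funext j
  rw [eveOutput, eveOutput, h.1, h.2]

theorem bobSide_apply_eq {c c' : Ω} {i : Fin n} (hbit : M.bit c i = M.bit c' i)
    (herasure : M.erasure c i = M.erasure c' i) : M.bobSide c i = M.bobSide c' i := by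
  rw [bobSide, bobSide, hbit, herasure]

theorem eveSide_apply_eq {c c' : Ω} {i : Fin n} (hbit : M.bit c i = M.bit c' i)
    (hflip : M.flip c i = M.flip c' i) : M.eveSide c i = M.eveSide c' i := by
  rw [eveSide, eveSide, hbit, hflip]

theorem isIndepBernoulli_erasure (i : Fin n) : IsIndepBernoulli M.q (fun c => M.erasure c i)
    (fun c => ((M.flip c i, M.bit c i), M.aux i c)) β := by
  refine (M.isIIDNoise_erasure i).of_factorsThrough fun c c' h => ?_
  simp only [Prod.mk.injEq, funext_iff, Subtype.forall] at h
  obtain ⟨herasure, hbit, hflip, hinput, hchannel⟩ := h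
  refine Prod.ext (Prod.ext (hflip i) (hbit i)) (pastFuture_eq_iff.2 ⟨fun j _ => ?_, fun j hj => ?_,
    M.eveOutput_factorsThrough (Prod.ext (funext hinput) (funext hchannel))⟩)
  · exact M.eveSide_apply_eq (hbit j) (hflip j)
  · exact M.bobSide_apply_eq (hbit j) (herasure j hj.ne')

theorem isIndepBernoulli_flip (i : Fin n) : IsIndepBernoulli M.q (fun c => M.flip c i)
    (fun c => (M.bit c i, M.aux i c)) ε := by
  refine (M.isIIDNoise_flip i).of_factorsThrough fun c c' h => ?_
  simp only [Prod.mk.injEq, funext_iff, Subtype.forall] at h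
  obtain ⟨hflip, hbit, herasure, hinput, hchannel⟩ := h
  refine Prod.ext (hbit i) (pastFuture_eq_iff.2 ⟨fun j hj => ?_, fun j _ => ?_,
    M.eveOutput_factorsThrough (Prod.ext (funext hinput) (funext hchannel))⟩)
  · exact M.eveSide_apply_eq (hbit j) (hflip j hj.ne)
  · exact M.bobSide_apply_eq (hbit j) (herasure j)

theorem condH_bobSide_aux (i : Fin n) : condH M.q (fun c => M.bobSide c i) (M.aux i) =
    h2 β + (1 - β) * condH M.q (fun c => M.bit c i) (M.aux i) :=
  IsIndepBernoulli.condH_erase M.isPMF ((M.isIndepBernoulli_erasure i).of_factorsThrough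
    fun _ _ h => by simp only [Prod.mk.injEq] at h ⊢; exact ⟨h.1.2, h.2⟩)

theorem condH_letter_aux (i : Fin n) :
    condH M.q (fun c => M.letter c i) (M.aux i) =
      h2 β + h2 ε + condH M.q (fun c => M.bit c i) (M.aux i) := by
  simp only [letter]
  rw [condH_prodMk M.isPMF, condH_prodMk M.isPMF, (M.isIndepBernoulli_erasure i).condH_eq M.isPMF,
    (M.isIndepBernoulli_flip i).condH_eq M.isPMF]
  ring

theorem condH_letter_eq_add_eveSide :
    condH M.q M.letter M.eveOutput =
      n * h2 β + condH M.q M.eveSide M.eveOutput +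
        condH M.q M.bit (fun c => (M.eveSide c, M.eveOutput c)) := by
  have hnoise : IsIIDNoise M.q M.erasure
      (fun c => ((M.bit c, M.eveSide c), M.eveOutput c)) β :=
    M.isIIDNoise_erasure.of_factorsThrough fun c c' h => by
      simp only [Prod.mk.injEq] at h ⊢
      obtain ⟨hbit, hflip, hinput, hchannel⟩ := h
      exact ⟨⟨hbit, funext fun i => M.eveSide_apply_eq (by rw [hbit]) (by rw [hflip])⟩,
        M.eveOutput_factorsThrough (Prod.ext hinput hchannel)⟩
  calc condH M.q M.letter M.eveOutput
      = condH M.q (fun c => (M.erasure c, M.bit c, M.eveSide c)) M.eveOutput := by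
        refine condH_congr M.isPMF (fun _ _ => Iff.rfl) fun c c' _ => ?_
        simp only [funext_iff, letter, Prod.mk.injEq, ← forall_and, eveSide]
        refine forall_congr' fun i => and_congr_right fun _ => and_comm.trans ?_
        exact and_congr_right fun hbit => by rw [hbit, Bool.xor_right_inj]
    _ = _ := by
        rw [condH_prodMk M.isPMF, condH_prodMk M.isPMF, hnoise.condH_eq M.isPMF]
        ring

theorem condH_letter_eq_add_bobSide :
    condH M.q M.letter M.eveOutput =
      n * h2 ε + condH M.q M.bobSide M.eveOutput +
        condH M.q M.bit (fun c => (M.bobSide c, M.eveOutput c)) := by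
  have hnoise : IsIIDNoise M.q M.flip
      (fun c => ((M.bit c, M.bobSide c), M.eveOutput c)) ε :=
    M.isIIDNoise_flip.of_factorsThrough fun c c' h => by
      simp only [Prod.mk.injEq] at h ⊢
      obtain ⟨hbit, herasure, hinput, hchannel⟩ := h
      exact ⟨⟨hbit, funext fun i => M.bobSide_apply_eq (by rw [hbit]) (by rw [herasure])⟩,
        M.eveOutput_factorsThrough (Prod.ext hinput hchannel)⟩
  calc condH M.q M.letter M.eveOutput
      = condH M.q (fun c => (M.flip c, M.bit c, M.bobSide c)) M.eveOutput := by
        refine condH_congr M.isPMF (fun _ _ => Iff.rfl) fun c c' _ => ?_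
        simp only [funext_iff, letter, Prod.mk.injEq, ← forall_and, bobSide]
        grind
    _ = _ := by
        rw [condH_prodMk M.isPMF, condH_prodMk M.isPMF, hnoise.condH_eq M.isPMF]
        ring

theorem condH_letter_sub_condH_eveSide_le :
    condH M.q M.letter M.eveOutput -
      condH M.q M.eveSide M.eveOutput ≤ ∑ i, (h2 β + h2 ε +
        condH M.q (fun c => M.bit c i) (M.aux i) -
          condH M.q (fun c => M.eveSide c i) (M.aux i)) := by
  rw [condH_sub_condH_eq_sum M.isPMF]
  refine sum_le_sum fun i _ => ?_
  rw [← M.condH_letter_aux i]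
  refine condH_sub_condH_le_of_factorsThrough M.isPMF (fun c c' h => ?_) fun c c' h => ?_
  · simp only [letter, Prod.mk.injEq] at h
    exact M.eveSide_apply_eq h.2.2 h.2.1
  · simp only [pastFuture_eq_iff, letter, Prod.mk.injEq] at h ⊢
    exact ⟨h.1, fun j hj => M.bobSide_apply_eq (h.2.1 j hj).2.2 (h.2.1 j hj).1, h.2.2⟩

theorem condH_bit_eveOutput_le :
    condH M.q M.bit (fun c => (M.bobSide c, M.eveOutput c)) ≤
      condH M.q M.bit (fun c => (M.bobSide c, M.input c)) + m * h2 ζ := by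
  have hpmf := M.isPMF
  have hinput : condH M.q M.input (fun c => (M.bobSide c, M.eveOutput c)) ≤ m * h2 ζ := by
    have hfactor : M.input.FactorsThrough
        fun c => (M.channelFlip c, M.bobSide c, M.eveOutput c) := by
      intro c c' h
      simp only [Prod.mk.injEq, funext_iff, eveOutput] at h
      funext j
      simpa only [h.1 j, Bool.xor_left_inj] using h.2.2 j
    refine (condH_le_sum_Hof_of_factorsThrough hpmf hfactor).trans_eq ?_
    simp only [Hof_bool hpmf, (M.isIIDNoise_channelFlip _).pushf_true hpmf, sum_const, card_univ,
      Fintype.card_fin, nsmul_eq_mul]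
  calc condH M.q M.bit (fun c => (M.bobSide c, M.eveOutput c))
      ≤ condH M.q (fun c => (M.bit c, M.input c)) (fun c => (M.bobSide c, M.eveOutput c)) :=
        condH_le_condH_of_factorsThrough_left hpmf fun _ _ h => by
          simp only [Prod.mk.injEq] at h
          exact h.1.1
    _ = condH M.q M.input (fun c => (M.bobSide c, M.eveOutput c)) +
          condH M.q M.bit (fun c => (M.input c, M.bobSide c, M.eveOutput c)) :=
        condH_prodMk hpmf _ _ _
    _ ≤ m * h2 ζ + condH M.q M.bit (fun c => (M.bobSide c, M.input c)) :=
        add_le_add hinput (condH_le_condH_of_factorsThrough_right hpmf _ fun _ _ h => by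
          simp only [Prod.mk.injEq] at h ⊢
          exact ⟨h.2.1, h.1⟩)
    _ = _ := add_comm _ _

theorem condH_bit_eveSide_le_sum :
    condH M.q M.bit (fun c => (M.eveSide c, M.eveOutput c)) ≤
      ∑ i, (h2 ε + condH M.q (fun c => M.bit c i) (M.aux i) -
        condH M.q (fun c => M.eveSide c i) (M.aux i)) := by
  have hsum := M.condH_letter_sub_condH_eveSide_le
  rw [M.condH_letter_eq_add_eveSide] at hsum
  simp only [add_sub_assoc, add_assoc, sum_add_distrib (f := fun _ => h2 β), sum_const, card_univ,
    Fintype.card_fin, nsmul_eq_mul] at hsum ⊢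
  linarith

theorem condH_bit_eveSide_le_add_sum :
    condH M.q M.bit (fun c => (M.eveSide c, M.eveOutput c)) ≤
      condH M.q M.bit (fun c => (M.bobSide c, M.input c)) + m * h2 ζ +
        ∑ i, (h2 ε + (1 - β) * condH M.q (fun c => M.bit c i) (M.aux i) -
          condH M.q (fun c => M.eveSide c i) (M.aux i)) := by
  have hcsiszar := condH_sub_condH_eq_sum M.isPMF M.eveSide M.bobSide M.eveOutput
  have hnoise := M.condH_letter_eq_add_eveSide.symm.trans M.condH_letter_eq_add_bobSide
  have hchannel := M.condH_bit_eveOutput_le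
  simp only [M.condH_bobSide_aux, sum_sub_distrib, sum_add_distrib, sum_const, card_univ,
    Fintype.card_fin, nsmul_eq_mul] at hcsiszar ⊢
  linarith

theorem exists_condH_bit_le (hε : ε ∈ Set.Icc 0 1) (hn : 0 < n) : ∃ u ∈ Set.Icc (0 : ℝ) 2⁻¹,
    condH M.q M.bit (fun c => (M.eveSide c, M.eveOutput c)) ≤
      n * (h2 ε + h2 u - h2 (bstar ε u)) - max 0 (n * (β * h2 u) - m * h2 ζ -
        condH M.q M.bit (fun c => (M.bobSide c, M.input c))) := by
  have hn' : (0 : ℝ) < n := Nat.cast_pos.2 hn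
  have hmem := fun i => condH_bool_mem_Icc M.isPMF (fun c => M.bit c i) (M.aux i)
  obtain ⟨u, hu, hbit⟩ : ∃ u ∈ Set.Icc (0 : ℝ) 2⁻¹,
      h2 u = (∑ i, condH M.q (fun c => M.bit c i) (M.aux i)) / n := by
    refine exists_h2_eq ⟨div_nonneg (sum_nonneg fun i _ => (hmem i).1) hn'.le, ?_⟩
    rw [div_le_one hn']
    exact (sum_le_sum fun i _ => (hmem i).2).trans_eq (by simp)
  have hbit : ∑ i, condH M.q (fun c => M.bit c i) (M.aux i) = n * h2 u := by
    rw [hbit, mul_div_cancel₀ _ hn'.ne']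
  have hgerber : n * h2 (bstar ε u) ≤ ∑ i, condH M.q (fun c => M.eveSide c i) (M.aux i) := by
    simpa only [Fintype.card_fin, eveSide] using card_mul_h2_bstar_le_sum_condH M.isPMF hε
      M.isIndepBernoulli_flip ⟨hu.1, hu.2.trans (by norm_num)⟩ (by rw [hbit, Fintype.card_fin])
  have hsource := M.condH_bit_eveSide_le_sum
  have hchannel := M.condH_bit_eveSide_le_add_sum
  simp only [sum_sub_distrib, sum_add_distrib, ← mul_sum, hbit, sum_const, card_univ,
    Fintype.card_fin, nsmul_eq_mul] at hsource hchannel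
  refine ⟨u, hu, ?_⟩
  rcases max_cases 0 (n * (β * h2 u) - m * h2 ζ -
    condH M.q M.bit (fun c => (M.bobSide c, M.input c))) with h | h <;> rw [h.1] <;> linarith

end BinaryModel

section IIDBernoulli

variable {n : ℕ} {p : ℝ}

/-- The law of `n` i.i.d. Bernoulli bits. -/
noncomputable def iidBernoulli (p : ℝ) (v : Fin n → Bool) : ℝ :=
  ∏ i, bernoulliMass p (v i)

theorem isPMF_iidBernoulli (hp : p ∈ Set.Icc 0 1) :
    IsPMF (iidBernoulli p : (Fin n → Bool) → ℝ) := by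
  refine ⟨fun v => prod_nonneg fun i _ => ?_, ?_⟩
  · unfold bernoulliMass
    split_ifs <;> linarith [hp.1, hp.2]
  · simp only [iidBernoulli]
    rw [← Fintype.prod_sum fun _ : Fin n => bernoulliMass p]
    simp [bernoulliMass]

theorem iidBernoulli_update_mul (p : ℝ) (v : Fin n → Bool) (i : Fin n) (b : Bool) :
    iidBernoulli p (Function.update v i b) * bernoulliMass p (v i) =
      iidBernoulli p v * bernoulliMass p b := by
  have hrest : ∀ j ∈ univ.erase i, bernoulliMass p (Function.update v i b j) =
      bernoulliMass p (v j) := fun j hj => by rw [Function.update_of_ne (ne_of_mem_erase hj)]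
  rw [iidBernoulli, iidBernoulli, ← mul_prod_erase univ _ (mem_univ i),
    ← mul_prod_erase univ (fun j => bernoulliMass p (v j)) (mem_univ i), prod_congr rfl hrest,
    Function.update_self]
  ring

theorem isIIDNoise_of_pushf_eq_mul {Ω α : Type} [Fintype Ω] [Finite α] {q : Ω → ℝ}
    {N : Ω → Fin n → Bool} {V : Ω → α} {r : α → ℝ}
    (h : ∀ v w, pushf q (fun c => (N c, V c)) (v, w) = iidBernoulli p v * r w) :
    IsIIDNoise q N V p := by
  cases nonempty_fintype α
  intro i
  have hflip : IsIndepBernoulli (pushf q fun c => (N c, V c)) (fun x => x.1 i)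
      (fun x => (fun j : {j // j ≠ i} => x.1 j, x.2)) p := by
    refine isIndepBernoulli_of_involutive (τ := fun x => (Function.update x.1 i (!x.1 i), x.2))
      (fun x => by simp) (fun x => by simp) (fun x => ?_) fun x => ?_
    · simp +contextual [funext_iff]
    · rw [h, h, mul_right_comm, iidBernoulli_update_mul, mul_right_comm]
  intro t w
  simpa only [pushf_pushf] using hflip t w

theorem isIIDNoise_of_bijective {Ω α : Type} [Fintype Ω] [Finite α] {q : Ω → ℝ}
    {N : Ω → Fin n → Bool} {V : Ω → α} {r : α → ℝ}
    (hbij : Function.Bijective fun c => (N c, V c))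
    (h : ∀ c, q c = iidBernoulli p (N c) * r (V c)) : IsIIDNoise q N V p := by
  refine isIIDNoise_of_pushf_eq_mul (r := r) fun v w => ?_
  obtain ⟨c, hc⟩ := hbij.2 (v, w)
  obtain ⟨rfl, rfl⟩ := Prod.mk.inj hc
  rw [pushf_apply_of_injective q hbij.1, h]

end IIDBernoulli

section CodeModel

variable {n m : ℕ} {β ε ζ : ℝ}

/-- Values of `(Aⁿ, Sⁿ, Vⁿ, Xᵐ, Tᵐ)`: the source bits, the erasures of Bob's side information, the
bit flips of Eve's side information, the channel input, and the bit flips of Eve's channel. -/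
abbrev Outcome (n m : ℕ) : Type :=
  (Fin n → Bool) × (Fin n → Bool) × (Fin n → Bool) × (Fin m → Bool) × (Fin m → Bool)

/-- The law of `(Aⁿ, Sⁿ, Vⁿ, Xᵐ, Tᵐ)` when the encoder is `F`. -/
noncomputable def codeWeight (β ε ζ : ℝ) (F : (Fin n → Bool) → (Fin m → Bool) → ℝ)
    (c : Outcome n m) : ℝ :=
  iidBernoulli 2⁻¹ c.1 * iidBernoulli β c.2.1 * iidBernoulli ε c.2.2.1 * F c.1 c.2.2.2.1 *
    iidBernoulli ζ c.2.2.2.2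

theorem isPMF_codeWeight (hβ : β ∈ Set.Icc 0 1) (hε : ε ∈ Set.Icc 0 1) (hζ : ζ ∈ Set.Icc 0 1)
    {F : (Fin n → Bool) → (Fin m → Bool) → ℝ} (hF : IsKernel F) :
    IsPMF (codeWeight β ε ζ F) := by
  have hA : IsPMF (iidBernoulli 2⁻¹ : (Fin n → Bool) → ℝ) := isPMF_iidBernoulli (by norm_num)
  have hS : IsPMF (iidBernoulli β : (Fin n → Bool) → ℝ) := isPMF_iidBernoulli hβ
  have hV : IsPMF (iidBernoulli ε : (Fin n → Bool) → ℝ) := isPMF_iidBernoulli hε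
  have hT : IsPMF (iidBernoulli ζ : (Fin m → Bool) → ℝ) := isPMF_iidBernoulli hζ
  refine ⟨fun c => mul_nonneg (mul_nonneg (mul_nonneg (mul_nonneg (hA.1 _) (hS.1 _)) (hV.1 _))
    ((hF _).1 _)) (hT.1 _), ?_⟩
  simp only [codeWeight, Fintype.sum_prod_type, ← mul_sum, hT.2, mul_one, (hF _).2, hV.2, hS.2,
    hA.2]

theorem binSource_apply_erase_xor (β ε : ℝ) (a s v : Bool) :
    binSource β ε (a, if s then none else some a, xor a v) =
      bernoulliMass 2⁻¹ a * bernoulliMass β s * bernoulliMass ε v := by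
  have one_sub_half : (1 : ℝ) - 2⁻¹ = 2⁻¹ := by norm_num
  cases a <;> cases s <;> cases v <;> simp [binSource, bernoulliMass, one_sub_half]

theorem binSource_eq_zero {a : Bool} {b : Option Bool} (e : Bool) (hb : b ≠ none)
    (hba : b ≠ some a) : binSource β ε (a, b, e) = 0 := by
  simp [binSource, hb, hba]

theorem wiretapII_apply_xor (ζ : ℝ) (x t : Bool) :
    wiretapII ζ x (x, xor x t) = bernoulliMass ζ t := by
  cases x <;> cases t <;> simp [wiretapII, bernoulliMass]

theorem wiretapII_eq_zero {x y : Bool} (z : Bool) (hy : y ≠ x) : wiretapII ζ x (y, z) = 0 := by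
  simp [wiretapII, hy]

namespace BinaryModel

/-- The random variables of the model in the order of `codeJoint`. -/
def realization {Ω : Type} [Fintype Ω] (M : BinaryModel Ω n m β ε ζ) (c : Ω) :
    (Fin n → Bool) × (Fin n → Option Bool) × (Fin n → Bool) × (Fin m → Bool) × (Fin m → Bool) ×
      (Fin m → Bool) :=
  (M.bit c, M.bobSide c, M.eveSide c, M.input c, M.input c, M.eveOutput c)

variable (hβ : β ∈ Set.Icc 0 1) (hε : ε ∈ Set.Icc 0 1) (hζ : ζ ∈ Set.Icc 0 1)
  {F : (Fin n → Bool) → (Fin m → Bool) → ℝ} (hF : IsKernel F)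

/-- The binary model of the code with encoder `F`. -/
noncomputable def ofKernel : BinaryModel (Outcome n m) n m β ε ζ where
  q := codeWeight β ε ζ F
  bit c := c.1
  erasure c := c.2.1
  flip c := c.2.2.1
  input c := c.2.2.2.1
  channelFlip c := c.2.2.2.2
  isPMF := isPMF_codeWeight hβ hε hζ hF
  isIIDNoise_erasure := isIIDNoise_of_bijective
    (r := fun w => iidBernoulli 2⁻¹ w.1 * iidBernoulli ε w.2.1 * F w.1 w.2.2.1 *
      iidBernoulli ζ w.2.2.2)
    ⟨fun c c' => by grind, fun ⟨s, a, v, x, t⟩ => ⟨(a, s, v, x, t), rfl⟩⟩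
    fun c => by simp only [codeWeight]; ring
  isIIDNoise_flip := isIIDNoise_of_bijective
    (r := fun w => iidBernoulli 2⁻¹ w.1 * iidBernoulli β w.2.1 * F w.1 w.2.2.1 *
      iidBernoulli ζ w.2.2.2)
    ⟨fun c c' => by grind, fun ⟨v, a, s, x, t⟩ => ⟨(a, s, v, x, t), rfl⟩⟩
    fun c => by simp only [codeWeight]; ring
  isIIDNoise_channelFlip := isIIDNoise_of_bijective
    (r := fun w => iidBernoulli 2⁻¹ w.1 * iidBernoulli β w.2.1 * iidBernoulli ε w.2.2.1 *
      F w.1 w.2.2.2)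
    ⟨fun c c' => by grind, fun ⟨t, a, s, v, x⟩ => ⟨(a, s, v, x, t), rfl⟩⟩
    fun c => by simp only [codeWeight]; ring

theorem realization_ofKernel_injective : (ofKernel hβ hε hζ hF).realization.Injective := by
  rintro ⟨a, s, v, x, t⟩ ⟨a', s', v', x', t'⟩ h
  simp only [realization, ofKernel, Prod.mk.injEq] at h
  obtain ⟨rfl, hs, hv, rfl, -, ht⟩ := h
  have hs : s = s' := funext fun i => by
    have hsi := congrFun hs i
    simp only [bobSide] at hsi
    grind
  have hv : v = v' := funext fun i => Bool.xor_right_inj.1 (congrFun hv i)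
  have ht : t = t' := funext fun j => Bool.xor_right_inj.1 (congrFun ht j)
  rw [hs, hv, ht]

theorem codeJoint_realization_ofKernel (c : Outcome n m) :
    codeJoint (binSource β ε) (wiretapII ζ) F ((ofKernel hβ hε hζ hF).realization c) =
      (ofKernel hβ hε hζ hF).q c := by
  simp only [codeJoint, realization, bobSide, eveSide, eveOutput, ofKernel,
    binSource_apply_erase_xor, wiretapII_apply_xor, prod_mul_distrib, codeWeight, iidBernoulli]

theorem mem_range_realization_ofKernel {a : Fin n → Bool} {b : Fin n → Option Bool}
    (e : Fin n → Bool) {x y : Fin m → Bool} (z : Fin m → Bool)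
    (hb : ∀ i, b i = none ∨ b i = some (a i)) (hy : ∀ j, y j = x j) :
    (a, b, e, x, y, z) ∈ Set.range (ofKernel hβ hε hζ hF).realization := by
  obtain rfl : y = x := funext hy
  refine ⟨(a, fun i => (b i).isNone, fun i => xor (a i) (e i), y, fun j => xor (y j) (z j)), ?_⟩
  simp only [realization, Prod.mk.injEq, funext_iff]
  refine ⟨fun _ => rfl, fun i => ?_, fun _ => Bool.bne_self_left _ _, fun _ => rfl,
    fun _ => rfl, fun _ => Bool.bne_self_left _ _⟩
  rcases hb i with h | h <;> simp [ofKernel, bobSide, h]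

theorem codeJoint_eq_pushf_ofKernel :
    codeJoint (binSource β ε) (wiretapII ζ) F =
      pushf (ofKernel hβ hε hζ hF).q (ofKernel hβ hε hζ hF).realization := by
  funext w
  by_cases hw : w ∈ Set.range (ofKernel hβ hε hζ hF).realization
  · obtain ⟨c, rfl⟩ := hw
    rw [pushf_apply_of_injective _ (realization_ofKernel_injective hβ hε hζ hF),
      codeJoint_realization_ofKernel]
  rw [pushf_apply_of_notMem_range _ hw]
  obtain ⟨a, b, e, x, y, z⟩ := w
  contrapose! hw
  simp only [codeJoint, ne_eq, mul_eq_zero, not_or, prod_eq_zero_iff, mem_univ, true_and,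
    not_exists] at hw
  refine mem_range_realization_ofKernel hβ hε hζ hF e z (fun i => ?_) fun j => ?_
  · by_contra! hi
    exact hw.1.1 i (binSource_eq_zero (e i) hi.1 hi.2)
  · by_contra hj
    exact hw.2 j (wiretapII_eq_zero (z j) hj)

end BinaryModel

end CodeModel

theorem exists_nonneg_of_forall_pos {α : Type*} [TopologicalSpace α] [CompactSpace α]
    {f : α × ℝ → ℝ} (hf : Continuous f) (h : ∀ δ > 0, ∃ x, 0 ≤ f (x, δ)) : ∃ x, 0 ≤ f (x, 0) := by
  have hclosed : IsClosed (Prod.snd '' {y | 0 ≤ f y}) :=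
    isClosedMap_snd_of_compactSpace _ (isClosed_le continuous_const hf)
  have hpos : Set.Ioi 0 ⊆ Prod.snd '' {y | 0 ≤ f y} := fun δ hδ =>
    let ⟨x, hx⟩ := h δ hδ
    ⟨(x, δ), hx, rfl⟩
  obtain ⟨⟨x, _⟩, hx, rfl⟩ := closure_minimal hpos hclosed
    ((closure_Ioi (0 : ℝ)).ge Set.self_mem_Ici)
  exact ⟨x, hx⟩

section OuterBound

variable {n m : ℕ} {β ε ζ D : ℝ}

theorem exists_condH_codeJoint_le (hβ : β ∈ Set.Icc 0 1) (hε : ε ∈ Set.Icc 0 1)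
    (hζ : ζ ∈ Set.Icc 0 1) (hn : 0 < n) {F : (Fin n → Bool) → (Fin m → Bool) → ℝ}
    (hF : IsKernel F) (g : (Fin n → Option Bool) → (Fin m → Bool) → Fin n → Bool)
    (hD : expVal (codeJoint (binSource β ε) (wiretapII ζ) F)
      (fun w => seqDist hamming w.1 (g w.2.1 w.2.2.2.2.1)) ≤ D) :
    ∃ u ∈ Set.Icc (0 : ℝ) 2⁻¹, condH (codeJoint (binSource β ε) (wiretapII ζ) F) (fun w => w.1)
        (fun w => (w.2.2.1, w.2.2.2.2.2)) ≤
      n * (h2 ε + h2 u - h2 (bstar ε u)) -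
        max 0 (n * (β * h2 u) - m * h2 ζ - n * h2 (min D 2⁻¹)) := by
  obtain ⟨M, hjoint⟩ : ∃ M : BinaryModel (Outcome n m) n m β ε ζ,
      codeJoint (binSource β ε) (wiretapII ζ) F = pushf M.q M.realization :=
    ⟨_, BinaryModel.codeJoint_eq_pushf_ofKernel hβ hε hζ hF⟩
  have hequiv : condH (codeJoint (binSource β ε) (wiretapII ζ) F) (fun w => w.1)
      (fun w => (w.2.2.1, w.2.2.2.2.2)) =
        condH M.q M.bit fun c => (M.eveSide c, M.eveOutput c) := by
    rw [hjoint, condH_pushf]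
    rfl
  have hdist : expVal M.q (fun c => seqDist hamming (M.bit c) (g (M.bobSide c) (M.input c))) ≤
      D := by
    rw [hjoint, expVal, sum_pushf_mul] at hD
    exact hD
  have hfano : condH M.q M.bit (fun c => (M.bobSide c, M.input c)) ≤ n * h2 (min D 2⁻¹) := by
    refine (condH_le_mul_h2_expVal M.isPMF hn M.bit _ fun v => g v.1 v.2).trans ?_
    gcongr
    exact h2_le_h2_min (expVal_seqDist_hamming_nonneg M.isPMF _ _) hdist
  obtain ⟨u, hu, hbound⟩ := M.exists_condH_bit_le hε hn
  refine ⟨u, hu, ?_⟩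
  rw [hequiv]
  exact hbound.trans (sub_le_sub_left (max_le_max le_rfl (sub_le_sub_left hfano _)) _)

theorem Achievable.exists_le_of_pos (hβ : β ∈ Set.Icc 0 1) (hε : ε ∈ Set.Icc 0 1)
    (hζ : ζ ∈ Set.Icc 0 1) {k Δ : ℝ}
    (hach : Achievable (binSource β ε) (wiretapII ζ) hamming k D Δ) {δ : ℝ} (hδ : 0 < δ) :
    ∃ u ∈ Set.Icc (0 : ℝ) 2⁻¹, Δ - δ ≤ h2 ε + h2 u - h2 (bstar ε u) -
      max 0 (β * h2 u - (k + δ) * h2 ζ - h2 (min (D + δ) 2⁻¹)) := by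
  obtain ⟨n, m, hn, F, g, hF, hrate, hdist, hequiv⟩ := hach δ hδ
  obtain ⟨u, hu, hbound⟩ := exists_condH_codeJoint_le hβ hε hζ hn hF g hdist
  have hn' : (0 : ℝ) < n := Nat.cast_pos.2 hn
  have hm : m * h2 ζ ≤ n * ((k + δ) * h2 ζ) := by
    rw [← mul_assoc, mul_comm (n : ℝ)]
    exact mul_le_mul_of_nonneg_right ((div_le_iff₀ hn').1 hrate) (h2_nonneg hζ)
  refine ⟨u, hu, le_of_mul_le_mul_left ?_ hn'⟩
  calc n * (Δ - δ)
      ≤ condH (codeJoint (binSource β ε) (wiretapII ζ) F) (fun w => w.1)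
          (fun w => (w.2.2.1, w.2.2.2.2.2)) := (le_inv_mul_iff₀ hn').1 hequiv
    _ ≤ _ := hbound
    _ ≤ n * (h2 ε + h2 u - h2 (bstar ε u)) -
          max 0 (n * (β * h2 u - (k + δ) * h2 ζ - h2 (min (D + δ) 2⁻¹))) := by
        gcongr
        linarith
    _ = n * (h2 ε + h2 u - h2 (bstar ε u) -
          max 0 (β * h2 u - (k + δ) * h2 ζ - h2 (min (D + δ) 2⁻¹))) := by
        rw [mul_sub _ _ (max _ _), mul_max_of_nonneg _ _ hn'.le, mul_zero]

theorem binary_outer_bound_general {β ε ζ k D Δ : ℝ} (hβ : β ∈ Set.Icc 0 1)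
    (hε : ε ∈ Set.Icc 0 1) (hζ : ζ ∈ Set.Icc 0 1)
    (hach : Achievable (binSource β ε) (wiretapII ζ) hamming k D Δ) :
    ∃ u ∈ Set.Icc (0 : ℝ) 2⁻¹, Δ ≤ h2 ε + h2 u - h2 (bstar ε u) -
      max 0 (β * h2 u - k * h2 ζ - h2 (min D 2⁻¹)) := by
  have hcont : Continuous fun x : Set.Icc (0 : ℝ) 2⁻¹ × ℝ =>
      h2 ε + h2 x.1 - h2 (bstar ε x.1) -
        max 0 (β * h2 x.1 - (k + x.2) * h2 ζ - h2 (min (D + x.2) 2⁻¹)) - (Δ - x.2) := by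
    have := continuous_h2
    unfold bstar
    fun_prop
  obtain ⟨u, hu⟩ := exists_nonneg_of_forall_pos hcont fun δ hδ =>
    let ⟨u, hu, hle⟩ := hach.exists_le_of_pos hβ hε hζ hδ
    ⟨⟨u, hu⟩, sub_nonneg.2 hle⟩
  exact ⟨u, u.2, by simpa only [add_zero, sub_zero, sub_nonneg] using hu⟩

end OuterBound

/-- **Proposition 3 (Binary outer bound).** In the binary BEC/BSC setup over the type-II
wiretap channel, if `(k=1, D=0, Δ)` is achievable then there exist `u, q ∈ [0,1/2]` with
`Δ ≤ h₂(ε) + h₂(u) − h₂(ε⋆u) − [ β·h₂(u) − (h₂(ζ) + h₂(q) − h₂(ζ⋆q)) ]₊`. -/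
theorem binary_outer_bound (β ε ζ Δ : ℝ)
    (hβ0 : 0 < β) (hβ1 : β ≤ 1)
    (hε0 : 0 ≤ ε) (hε1 : ε ≤ 1 / 2)
    (hζ0 : 0 ≤ ζ) (hζ1 : ζ ≤ 1 / 2)
    (hΔ : 0 ≤ Δ)
    (hach : Achievable (binSource β ε) (wiretapII ζ) hamming 1 0 Δ) :
    ∃ u q : ℝ, u ∈ Set.Icc (0 : ℝ) (1 / 2) ∧ q ∈ Set.Icc (0 : ℝ) (1 / 2) ∧
      Δ ≤ h2 ε + h2 u - h2 (bstar ε u)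
        - max 0 (β * h2 u - (h2 ζ + h2 q - h2 (bstar ζ q))) := by
  obtain ⟨u, hu, hle⟩ := binary_outer_bound_general ⟨hβ0.le, hβ1⟩
    ⟨hε0, hε1.trans one_half_lt_one.le⟩ ⟨hζ0, hζ1.trans one_half_lt_one.le⟩ hach
  have hbstar : bstar ζ (1 / 2) = 1 / 2 := by unfold bstar; ring
  refine ⟨u, 1 / 2, by rwa [one_div], by norm_num, ?_⟩
  rw [hbstar, add_sub_cancel_right]
  rwa [one_mul, min_eq_left (by norm_num), h2_zero, sub_zero] at hle

end SecureSC
end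

section
/- Conditional variance of V given (B,Y) in the Gaussian hybrid scheme (Schur-complement form): let P, P_B, P_Y > 0 be reals, α ∈ ℝ, β ∈ [0,1), and γ = √(1−β²). Then the 2×2 real matrix Σ = [[1+P_B, β·√P],[β·√P, P+P_Y]] is invertible, and with the row vector c = (α, (αβ−γ²)·√P) one has (α²+γ²) − c·Σ⁻¹·cᵀ = γ² · ( 1 + 1/P_B + α²/γ² + (P/P_Y)·(α+β)² ) / ( 1 + 1/P_B + (P/P_Y)·(1 + γ²/P_B) ). -/
open Matrix

/-!
The Schur complement is the ratio `det Γ / det Σ`, where `Γ` is the joint covariance matrix of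
`(V, B, Y)`. Writing `P = s²` and eliminating `β²` through `β² + γ² = 1`, one finds that `P_B P_Y`
splits off from both determinants, leaving the numerator and the denominator of the closed form.
-/

theorem schurCompl_fin_two_eq_det_div_det {K : Type*} [Field K] {a b c d : K}
    (h : !![a, b; c, d].det ≠ 0) (v x y z w : K) :
    v - ![x, y] ⬝ᵥ (!![a, b; c, d]⁻¹ *ᵥ ![z, w]) =
      !![v, x, y; z, a, b; w, c, d].det / !![a, b; c, d].det := by
  have hquad : ![x, y] ⬝ᵥ (!![a, b; c, d]⁻¹ *ᵥ ![z, w]) =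
      (x * (d * z - b * w) + y * (a * w - c * z)) / !![a, b; c, d].det := by
    rw [inv_def, adjugate_fin_two_of, Ring.inverse_eq_inv', smul_mulVec, dotProduct_smul,
      smul_eq_mul, inv_mul_eq_div]
    congr 1
    simp only [cons_mulVec, empty_mulVec, vec2_dotProduct']
    ring
  rw [hquad, sub_eq_iff_eq_add, ← add_div, eq_div_iff h, det_fin_two_of, det_fin_three]
  simp only [of_apply, cons_val]
  ring

section Covariance

variable {K : Type*} [Field K] {s pB pY β γ : K}

theorem det_cov_BY (hpB : pB ≠ 0) (hpY : pY ≠ 0) (hβγ : β ^ 2 + γ ^ 2 = 1) :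
    !![1 + pB, β * s; β * s, s ^ 2 + pY].det =
      pB * pY * (1 + 1 / pB + s ^ 2 / pY * (1 + γ ^ 2 / pB)) := by
  rw [det_fin_two_of]
  field_simp
  linear_combination -s ^ 2 * hβγ

theorem det_cov_VBY (hpB : pB ≠ 0) (hpY : pY ≠ 0) (hγ : γ ≠ 0) (hβγ : β ^ 2 + γ ^ 2 = 1)
    (α : K) :
    !![α ^ 2 + γ ^ 2, α, (α * β - γ ^ 2) * s;
       α, 1 + pB, β * s;
       (α * β - γ ^ 2) * s, β * s, s ^ 2 + pY].det =
      pB * pY * (γ ^ 2 * (1 + 1 / pB + α ^ 2 / γ ^ 2 + s ^ 2 / pY * (α + β) ^ 2)) := by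
  simp only [det_fin_three, of_apply, cons_val]
  field_simp
  linear_combination -s ^ 2 * (γ ^ 2 + pB * (α ^ 2 + γ ^ 2)) * hβγ

end Covariance

theorem condVar_V_given_BY_general (P PB PY α β γ : ℝ)
    (hP : 0 ≤ P) (hPB : 0 < PB) (hPY : 0 < PY) (hγ : γ ≠ 0) (hβγ : β ^ 2 + γ ^ 2 = 1) :
    IsUnit (!![1 + PB, β * Real.sqrt P; β * Real.sqrt P, P + PY] : Matrix (Fin 2) (Fin 2) ℝ).det ∧
    (α ^ 2 + γ ^ 2) -
      ![α, (α * β - γ ^ 2) * Real.sqrt P] ⬝ᵥ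
        ((!![1 + PB, β * Real.sqrt P; β * Real.sqrt P, P + PY] : Matrix (Fin 2) (Fin 2) ℝ)⁻¹ *ᵥ
          ![α, (α * β - γ ^ 2) * Real.sqrt P]) =
      γ ^ 2 * (1 + 1 / PB + α ^ 2 / γ ^ 2 + (P / PY) * (α + β) ^ 2)
        / (1 + 1 / PB + (P / PY) * (1 + γ ^ 2 / PB)) := by
  have hdet := det_cov_BY (s := √P) hPB.ne' hPY.ne' hβγ
  have hdetΓ := det_cov_VBY (s := √P) hPB.ne' hPY.ne' hγ hβγ α
  rw [Real.sq_sqrt hP] at hdet hdetΓ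
  have hdet_ne : !![1 + PB, β * √P; β * √P, P + PY].det ≠ 0 := by
    rw [hdet]
    positivity
  refine ⟨hdet_ne.isUnit, ?_⟩
  rw [schurCompl_fin_two_eq_det_div_det hdet_ne, hdetΓ, hdet,
    mul_div_mul_left _ _ (mul_pos hPB hPY).ne']

/-- **Conditional variance of `V` given `(B,Y)` in the Gaussian hybrid scheme**
(Schur-complement form): `Σ` is the covariance matrix of `(B,Y)`, `c` the vector of
covariances of `V` with `(B,Y)`; the Schur complement `Var(V) − c Σ⁻¹ cᵀ` equals
`γ²(1 + 1/P_B + α²/γ² + (P/P_Y)(α+β)²) / (1 + 1/P_B + (P/P_Y)(1 + γ²/P_B))`. -/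
theorem condVar_V_given_BY (P PB PY α β γ : ℝ)
    (hP : 0 < P) (hPB : 0 < PB) (hPY : 0 < PY)
    (hβ : β ∈ Set.Ico (0 : ℝ) 1) (hγ : γ = Real.sqrt (1 - β ^ 2)) :
    IsUnit (!![1 + PB, β * Real.sqrt P; β * Real.sqrt P, P + PY] : Matrix (Fin 2) (Fin 2) ℝ).det ∧
    (α ^ 2 + γ ^ 2) -
      ![α, (α * β - γ ^ 2) * Real.sqrt P] ⬝ᵥ
        ((!![1 + PB, β * Real.sqrt P; β * Real.sqrt P, P + PY] : Matrix (Fin 2) (Fin 2) ℝ)⁻¹ *ᵥ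
          ![α, (α * β - γ ^ 2) * Real.sqrt P]) =
      γ ^ 2 * (1 + 1 / PB + α ^ 2 / γ ^ 2 + (P / PY) * (α + β) ^ 2)
        / (1 + 1 / PB + (P / PY) * (1 + γ ^ 2 / PB)) := by
  have hγ_sq : 0 < 1 - β ^ 2 := sub_pos.2 ((sq_lt_one_iff₀ hβ.1).2 hβ.2)
  exact condVar_V_given_BY_general P PB PY α β γ hP.le hPB hPY
    (hγ ▸ (Real.sqrt_pos.2 hγ_sq).ne') (by rw [hγ, Real.sq_sqrt hγ_sq.le, add_sub_cancel])
end

section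
/- Conditional variance of V given (A,Y) in the Gaussian hybrid scheme (Schur-complement form): let P, P_Y > 0 be reals, α ∈ ℝ, β ∈ [0,1), and γ = √(1−β²). Then the 2×2 real matrix Σ = [[1, β·√P],[β·√P, P+P_Y]] is invertible, and with the row vector c = (α, (αβ−γ²)·√P) one has (α²+γ²) − c·Σ⁻¹·cᵀ = γ² / ( 1 + γ²·P/P_Y ). -/
/-!
Given `(A, Y)`, the summand `αA` of `V = αA + γN` is known, so `V` and `γN` have the same
conditional variance. Since `γN` is uncorrelated with `A` and has covariance `-γ²√P` with `Y`, only
the entry `(Σ⁻¹)_YY = 1 / det Σ = 1 / (γ²P + P_Y)` contributes, which leaves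
`γ² - γ⁴P / (γ²P + P_Y)`.
-/

open Matrix

section SchurComplement

variable {n R : Type*} [Fintype n] [DecidableEq n] [CommRing R]

/-- The Schur complement of `S` in the symmetric block matrix with scalar block `v` and
off-diagonal blocks `c`. When `v = Var(V)`, `c = Cov(V, Q)` and `S = Cov(Q)` with `(V, Q)` jointly
Gaussian, it is the conditional variance of `V` given `Q`. It is meaningful only for `S`
invertible, since otherwise `S⁻¹ = 0`. -/
noncomputable def schurComplement (v : R) (c : n → R) (S : Matrix n n R) : R :=
  v - c ⬝ᵥ (S⁻¹ *ᵥ c)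

/-- In terms of variances, `Var(V + w ⬝ᵥ Q | Q) = Var(V | Q)`. -/
theorem schurComplement_add_mulVec {S : Matrix n n R} (hS : S.IsSymm) (hdet : IsUnit S.det)
    (v : R) (c w : n → R) :
    schurComplement (v + 2 * (w ⬝ᵥ c) + w ⬝ᵥ (S *ᵥ w)) (c + S *ᵥ w) S =
      schurComplement v c S := by
  have inv_apply : S⁻¹ *ᵥ (c + S *ᵥ w) = S⁻¹ *ᵥ c + w := by
    rw [mulVec_add, mulVec_mulVec, nonsing_inv_mul _ hdet, one_mulVec]
  have cross_term : (S *ᵥ w) ⬝ᵥ (S⁻¹ *ᵥ c) = w ⬝ᵥ c := by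
    rw [← vecMul_transpose, hS.eq, ← dotProduct_mulVec, mulVec_mulVec, mul_nonsing_inv _ hdet,
      one_mulVec]
  simp only [schurComplement, inv_apply, add_dotProduct, dotProduct_add, cross_term,
    dotProduct_comm c w, dotProduct_comm (S *ᵥ w) w]
  ring

theorem schurComplement_single (v t : R) (i : n) (S : Matrix n n R) :
    schurComplement v (Pi.single i t) S = v - t ^ 2 * S⁻¹ i i := by
  simp only [schurComplement, single_dotProduct, mulVec_single, Pi.smul_apply, col_apply,
    MulOpposite.smul_eq_mul_unop, MulOpposite.unop_op]
  ring

end SchurComplement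

theorem condVar_V_given_AY_general {K : Type*} [Field K] {P PY s β γ : K} (α : K)
    (hs : s ^ 2 = P) (hγ : γ ^ 2 = 1 - β ^ 2) (hPY : PY ≠ 0) (hD : γ ^ 2 * P + PY ≠ 0) :
    IsUnit (!![1, β * s; β * s, P + PY] : Matrix (Fin 2) (Fin 2) K).det ∧
    (α ^ 2 + γ ^ 2) -
      ![α, (α * β - γ ^ 2) * s] ⬝ᵥ
        ((!![1, β * s; β * s, P + PY] : Matrix (Fin 2) (Fin 2) K)⁻¹ *ᵥ
          ![α, (α * β - γ ^ 2) * s]) =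
      γ ^ 2 / (1 + γ ^ 2 * P / PY) := by
  set S : Matrix (Fin 2) (Fin 2) K := !![1, β * s; β * s, P + PY] with hS
  have det_eq : S.det = γ ^ 2 * P + PY := by
    rw [hS, det_fin_two_of, hγ]
    linear_combination (-β ^ 2) * hs
  have isUnit_det : IsUnit S.det := det_eq ▸ hD.isUnit
  have isSymm : S.IsSymm := by ext i j; fin_cases i <;> fin_cases j <;> rfl
  have inv_YY : S⁻¹ 1 1 = (γ ^ 2 * P + PY)⁻¹ := by
    rw [inv_def, det_eq, Ring.inverse_eq_inv', hS, adjugate_fin_two_of]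
    simp
  have cov_αA : S *ᵥ ![α, 0] = ![α, α * (β * s)] := by
    ext i; fin_cases i <;> simp [hS, mul_comm α]
  have cov_V : ![α, (α * β - γ ^ 2) * s] = Pi.single 1 (-(γ ^ 2 * s)) + S *ᵥ ![α, 0] := by
    rw [cov_αA, sub_mul, sub_eq_neg_add, mul_assoc]
    ext i; fin_cases i <;> simp
  have var_V : α ^ 2 + γ ^ 2 = γ ^ 2 + 2 * (![α, 0] ⬝ᵥ Pi.single 1 (-(γ ^ 2 * s))) +
      ![α, 0] ⬝ᵥ (S *ᵥ ![α, 0]) := by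
    rw [cov_αA, dotProduct_single, vec2_dotProduct']
    simp only [cons_val_one, cons_val_fin_one]
    ring
  refine ⟨isUnit_det, ?_⟩
  calc α ^ 2 + γ ^ 2 - ![α, (α * β - γ ^ 2) * s] ⬝ᵥ (S⁻¹ *ᵥ ![α, (α * β - γ ^ 2) * s])
    _ = schurComplement (γ ^ 2) (Pi.single 1 (-(γ ^ 2 * s))) S := by
      rw [cov_V, var_V]
      exact schurComplement_add_mulVec isSymm isUnit_det _ _ _
    _ = γ ^ 2 - γ ^ 4 * P / (γ ^ 2 * P + PY) := by
      rw [schurComplement_single, inv_YY, ← hs]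
      ring
    _ = γ ^ 2 / (1 + γ ^ 2 * P / PY) := by
      rw [one_add_div hPY, add_comm PY]
      field_simp
      ring

/-- **Conditional variance of `V` given `(A,Y)` in the Gaussian hybrid scheme**
(Schur-complement form): `Σ` is the covariance matrix of `(A,Y)`, `c` the vector of
covariances of `V` with `(A,Y)`; the Schur complement `Var(V) − c Σ⁻¹ cᵀ` equals
`γ² / (1 + γ²P/P_Y)`. -/
theorem condVar_V_given_AY (P PY α β γ : ℝ)
    (hP : 0 < P) (hPY : 0 < PY)
    (hβ : β ∈ Set.Ico (0 : ℝ) 1) (hγ : γ = Real.sqrt (1 - β ^ 2)) :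
    IsUnit (!![1, β * Real.sqrt P; β * Real.sqrt P, P + PY] : Matrix (Fin 2) (Fin 2) ℝ).det ∧
    (α ^ 2 + γ ^ 2) -
      ![α, (α * β - γ ^ 2) * Real.sqrt P] ⬝ᵥ
        ((!![1, β * Real.sqrt P; β * Real.sqrt P, P + PY] : Matrix (Fin 2) (Fin 2) ℝ)⁻¹ *ᵥ
          ![α, (α * β - γ ^ 2) * Real.sqrt P]) =
      γ ^ 2 / (1 + γ ^ 2 * P / PY) := by
  have hβ_sq : 0 ≤ 1 - β ^ 2 := sub_nonneg.2 (pow_le_one₀ hβ.1 hβ.2.le)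
  exact condVar_V_given_AY_general α (Real.sq_sqrt hP.le) (hγ ▸ Real.sq_sqrt hβ_sq) hPY.ne'
    (by positivity)
end

section
/- Distortion identity for the optimal Gaussian hybrid parameters: with P, P_Y, P_Z, P_E > 0, P_Y < P_Z, D satisfying 1/(1+P/P_Y) < D < (1+P/P_Z)/(1+P/P_Y), β = √(P_Z/P)·√(1 + P/P_Z − D·(1+P/P_Y)), γ = √(1−β²), and α = (β + γ²·√((1/D)·(P/P_Y − P/P_Z)))/(1 + γ²·P/P_Y) − β, one has 1 + α²/γ² + (P/P_Y)·(α+β)² = 1/D. -/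
/-! With `y = P / PY`, `z = P / PZ`, `g = γ ^ 2` and `u = α + β`, the left-hand side is `1` plus the
quadratic `(u - β) ^ 2 / g + y * u ^ 2` in `u`. Its minimum `y * β ^ 2 / (1 + g * y)` is attained at
`u = β / (1 + g * y)`, and `α` is chosen so that `u` overshoots this point by `g * s / (1 + g * y)`,
where `s ^ 2 = (y - z) / D`; this raises the value by `g * s ^ 2 / (1 + g * y)`. The choice of `β`
amounts to `g * z = D * (1 + y) - 1`, which makes the total equal to `1 / D`. -/

section Field

variable {K : Type*} [Field K]

theorem sq_sub_div_add_mul_sq_eq {g y : K} (hg : g ≠ 0) (hgy : 1 + g * y ≠ 0) (b u : K) :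
    (u - b) ^ 2 / g + y * u ^ 2 =
      (1 + g * y) / g * (u - b / (1 + g * y)) ^ 2 + y * b ^ 2 / (1 + g * y) := by
  field_simp
  ring

theorem sq_sub_div_add_mul_sq_of_eq_div {g y b s u : K} (hg : g ≠ 0) (hgy : 1 + g * y ≠ 0)
    (hu : u = (b + g * s) / (1 + g * y)) :
    (u - b) ^ 2 / g + y * u ^ 2 = (g * s ^ 2 + y * b ^ 2) / (1 + g * y) := by
  have overshoot : u - b / (1 + g * y) = g * s / (1 + g * y) := by
    rw [hu, add_div, add_sub_cancel_left]
  rw [sq_sub_div_add_mul_sq_eq hg hgy, overshoot]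
  field_simp

theorem one_add_sq_sub_div_add_mul_sq_eq_one_div {D g y z b s u : K}
    (hD : D ≠ 0) (hg : g ≠ 0) (hgy : 1 + g * y ≠ 0) (hbg : b ^ 2 = 1 - g)
    (hgz : g * z = D * (1 + y) - 1) (hs : D * s ^ 2 = y - z)
    (hu : u = (b + g * s) / (1 + g * y)) :
    1 + (u - b) ^ 2 / g + y * u ^ 2 = 1 / D := by
  have numerator : D * (1 + y + g * s ^ 2) = 1 + g * y := by
    linear_combination g * hs - hgz
  calc 1 + (u - b) ^ 2 / g + y * u ^ 2
      = 1 + (g * s ^ 2 + y * b ^ 2) / (1 + g * y) := by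
        rw [add_assoc, sq_sub_div_add_mul_sq_of_eq_div hg hgy hu]
    _ = (1 + y + g * s ^ 2) / (1 + g * y) := by
        rw [hbg]
        field_simp
        ring
    _ = 1 / D := by
        rw [div_eq_div_iff hgy hD, mul_comm, numerator, one_mul]

end Field

theorem one_sub_sqrt_inv_mul_sqrt_sq {z c : ℝ} (hz : 0 < z) (hc : c ≤ 1 + z) :
    1 - (√z⁻¹ * √(1 + z - c)) ^ 2 = (c - 1) / z := by
  rw [mul_pow, Real.sq_sqrt (inv_nonneg.2 hz.le), Real.sq_sqrt (sub_nonneg.2 hc)]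
  field_simp
  ring

/-- **Distortion identity for the optimal Gaussian hybrid parameters:** with
`β = √(P_Z/P)·√(1 + P/P_Z − D(1+P/P_Y))`, `γ = √(1−β²)` and
`α = (β + γ²·√((1/D)(P/P_Y − P/P_Z)))/(1 + γ²·P/P_Y) − β`, one has
`1 + α²/γ² + (P/P_Y)(α+β)² = 1/D`. -/
theorem gaussian_hybrid_distortion_identity (P PY PZ PE D α β γ : ℝ)
    (hP : 0 < P) (hPY : 0 < PY) (hPZ : 0 < PZ) (hPE : 0 < PE) (hYZ : PY < PZ)
    (hD1 : 1 / (1 + P / PY) < D) (hD2 : D < (1 + P / PZ) / (1 + P / PY))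
    (hβ : β = Real.sqrt (PZ / P) * Real.sqrt (1 + P / PZ - D * (1 + P / PY)))
    (hγ : γ = Real.sqrt (1 - β ^ 2))
    (hα : α = (β + γ ^ 2 * Real.sqrt ((1 / D) * (P / PY - P / PZ)))
                / (1 + γ ^ 2 * (P / PY)) - β) :
    1 + α ^ 2 / γ ^ 2 + (P / PY) * (α + β) ^ 2 = 1 / D := by
  have hy : 0 < P / PY := div_pos hP hPY
  have hz : 0 < P / PZ := div_pos hP hPZ
  have hzy : P / PZ < P / PY := div_lt_div_of_pos_left hP hPY hYZ
  have hy' : 0 < 1 + P / PY := by positivity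
  have hD : 0 < D := (one_div_pos.2 hy').trans hD1
  rw [div_lt_iff₀ hy'] at hD1
  rw [lt_div_iff₀ hy'] at hD2
  have hβγ : 1 - β ^ 2 = (D * (1 + P / PY) - 1) / (P / PZ) := by
    rw [hβ, ← inv_div P PZ, one_sub_sqrt_inv_mul_sqrt_sq hz hD2.le]
  have hβ_lt : 0 < 1 - β ^ 2 := hβγ ▸ div_pos (sub_pos.2 hD1) hz
  have hγ_sq : γ ^ 2 = 1 - β ^ 2 := by rw [hγ, Real.sq_sqrt hβ_lt.le]
  have hγ_pos : 0 < γ ^ 2 := hγ_sq ▸ hβ_lt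
  have hγz : γ ^ 2 * (P / PZ) = D * (1 + P / PY) - 1 := by
    rw [hγ_sq, hβγ, div_mul_cancel₀ _ hz.ne']
  have hs : D * √(1 / D * (P / PY - P / PZ)) ^ 2 = P / PY - P / PZ := by
    rw [Real.sq_sqrt (mul_nonneg (one_div_pos.2 hD).le (sub_nonneg.2 hzy.le)), ← mul_assoc,
      mul_one_div_cancel hD.ne', one_mul]
  have hαβ := one_add_sq_sub_div_add_mul_sq_eq_one_div hD.ne' hγ_pos.ne'
    (by positivity : 1 + γ ^ 2 * (P / PY) ≠ 0) (by rw [hγ_sq, sub_sub_cancel]) hγz hs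
    (eq_sub_iff_add_eq.1 hα)
  rwa [add_sub_cancel_right] at hαβ
end

section
/- Rate inequality for the optimal Gaussian hybrid parameters: with P, P_Y, P_Z, P_E > 0, P_Y < P_Z, D satisfying 1/(1+P/P_Y) < D < (1+P/P_Z)/(1+P/P_Y), β = √(P_Z/P)·√(1 + P/P_Z − D·(1+P/P_Y)), γ = √(1−β²), and α = (β + γ²·√((1/D)·(P/P_Y − P/P_Z)))/(1 + γ²·P/P_Y) − β, one has α²/γ² + (P/P_Y)·(α+β)² ≤ P/P_Y. -/
/-!
Write `a = P / P_Y`, `b = P / P_Z`, `g = γ²` and `u = α + β`. The left-hand side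
`(u - β)² / g + a u²` is a quadratic in `u` with minimiser `β / (1 + g a)`, and the prescribed `α`
puts `u` at distance `g s / (1 + g a)` from it, where `s² = (a - b) / D`. Completing the square and
using `β² + g = 1`, the rate inequality becomes equivalent to `s² ≤ a (1 + a)`, which holds because
`1 / D < 1 + a`.
-/

section Field

variable {K : Type*} [Field K]

theorem sub_sq_div_add_mul_sq_eq {a g : K} (hg : g ≠ 0) (h : 1 + g * a ≠ 0) (u β : K) :
    (u - β) ^ 2 / g + a * u ^ 2 =
      (((1 + g * a) * u - β) ^ 2 / g + a * β ^ 2) / (1 + g * a) := by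
  field_simp
  ring

variable [LinearOrder K] [IsStrictOrderedRing K]

theorem sub_sq_div_add_mul_sq_le_iff {a g β : K} (hg : 0 < g) (hβ : β ^ 2 + g = 1)
    (h : 0 < 1 + g * a) (s : K) :
    ((β + g * s) / (1 + g * a) - β) ^ 2 / g + a * ((β + g * s) / (1 + g * a)) ^ 2 ≤ a ↔
      s ^ 2 ≤ a * (1 + a) := by
  have hs : (g * s) ^ 2 / g = g * s ^ 2 := by field_simp
  rw [sub_sq_div_add_mul_sq_eq hg.ne' h.ne', mul_div_cancel₀ _ h.ne', add_sub_cancel_left, hs,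
    div_le_iff₀ h]
  calc g * s ^ 2 + a * β ^ 2 ≤ a * (1 + g * a)
      ↔ g * s ^ 2 ≤ a * (1 + g * a) - a * β ^ 2 := le_sub_iff_add_le.symm
    _ ↔ g * s ^ 2 ≤ g * (a * (1 + a)) := by
      rw [eq_sub_of_add_eq hβ]
      ring_nf
    _ ↔ s ^ 2 ≤ a * (1 + a) := mul_le_mul_iff_right₀ hg

theorem one_div_mul_sub_le_mul_one_add {a b D : K} (ha : 0 ≤ a) (hb : 0 ≤ b)
    (hD : 1 / (1 + a) ≤ D) : 1 / D * (a - b) ≤ a * (1 + a) := by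
  have hD_pos : 0 < D := lt_of_lt_of_le (by positivity) hD
  calc 1 / D * (a - b) ≤ 1 / D * a := by gcongr; exact sub_le_self a hb
    _ ≤ (1 + a) * a := by gcongr; exact (one_div_le (by positivity) hD_pos).1 hD
    _ = a * (1 + a) := mul_comm _ _

end Field

theorem one_sub_sqrt_inv_mul_sqrt_sq_s14 {b x : ℝ} (hb : 0 < b) (hx : x ≤ 1 + b) :
    1 - (√b⁻¹ * √(1 + b - x)) ^ 2 = (x - 1) / b := by
  rw [mul_pow, Real.sq_sqrt (inv_nonneg.2 hb.le), Real.sq_sqrt (sub_nonneg.2 hx)]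
  field_simp
  ring

/-- **Rate inequality for the optimal Gaussian hybrid parameters:** with
`β = √(P_Z/P)·√(1 + P/P_Z − D(1+P/P_Y))`, `γ = √(1−β²)` and
`α = (β + γ²·√((1/D)(P/P_Y − P/P_Z)))/(1 + γ²·P/P_Y) − β`, one has
`α²/γ² + (P/P_Y)(α+β)² ≤ P/P_Y`. -/
theorem gaussian_hybrid_rate_inequality (P PY PZ PE D α β γ : ℝ)
    (hP : 0 < P) (hPY : 0 < PY) (hPZ : 0 < PZ) (hPE : 0 < PE) (hYZ : PY < PZ)
    (hD1 : 1 / (1 + P / PY) < D) (hD2 : D < (1 + P / PZ) / (1 + P / PY))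
    (hβ : β = Real.sqrt (PZ / P) * Real.sqrt (1 + P / PZ - D * (1 + P / PY)))
    (hγ : γ = Real.sqrt (1 - β ^ 2))
    (hα : α = (β + γ ^ 2 * Real.sqrt ((1 / D) * (P / PY - P / PZ)))
                / (1 + γ ^ 2 * (P / PY)) - β) :
    α ^ 2 / γ ^ 2 + (P / PY) * (α + β) ^ 2 ≤ P / PY := by
  have hY : 0 < P / PY := div_pos hP hPY
  have hZ : 0 < P / PZ := div_pos hP hPZ
  have hZY : P / PZ ≤ P / PY := div_le_div_of_nonneg_left hP.le hPY hYZ.le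
  have hD_pos : 0 < D := lt_trans (by positivity) hD1
  have hD_lower : 1 < D * (1 + P / PY) := (div_lt_iff₀ (by positivity)).1 hD1
  have hD_upper : D * (1 + P / PY) < 1 + P / PZ := (lt_div_iff₀ (by positivity)).1 hD2
  have hβ_sq : 1 - β ^ 2 = (D * (1 + P / PY) - 1) / (P / PZ) := by
    rw [hβ, ← inv_div P PZ, one_sub_sqrt_inv_mul_sqrt_sq_s14 hZ hD_upper.le]
  have hβ_lt : 0 < 1 - β ^ 2 := hβ_sq ▸ div_pos (sub_pos.2 hD_lower) hZ
  have hγ_sq : γ ^ 2 = 1 - β ^ 2 := by rw [hγ, Real.sq_sqrt hβ_lt.le]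
  have hs : √(1 / D * (P / PY - P / PZ)) ^ 2 ≤ P / PY * (1 + P / PY) := by
    rw [Real.sq_sqrt (mul_nonneg (one_div_nonneg.2 hD_pos.le) (sub_nonneg.2 hZY))]
    exact one_div_mul_sub_le_mul_one_add hY.le hZ.le hD1.le
  have hβγ : β ^ 2 + γ ^ 2 = 1 := by rw [hγ_sq, add_sub_cancel]
  rw [hα, sub_add_cancel]
  exact (sub_sq_div_add_mul_sq_le_iff (hγ_sq ▸ hβ_lt) hβγ (by positivity) _).2 hs
end

section
/- Parameter elimination in the converse for the Gaussian digital region without side information at Bob: let P, P_Y, P_Z, P_E > 0 be reals with P_Y < P_Z, and let D, D_E be reals. Suppose there exist reals ν, μ, ζ such that ν ≤ μ ≤ 1, ν ≥ 1/(1+P/P_Y), P_Y ≤ ζ ≤ μ·(P+P_Y), D ≥ ν, D_E ≤ 1/(1/μ + 1/P_E), and D_E ≤ (1/(1/μ + 1/P_E))·(ν/μ)·(P_Z/P_Y)·(1/(1 + (P_Z−P_Y)/ζ)). Then there exists μ' ∈ [1/(1+P/P_Y), 1] such that D ≥ 1/(1+P/P_Y), D_E ≤ 1/(1/μ' + 1/P_E),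 and D_E ≤ (1/(1/μ' + 1/P_E))·D·(1+P/P_Y)/(1 + μ'·P/P_Z − (1−μ')·P_Y/P_Z). -/
/-!
The second bound on `DE` is nondecreasing in `ν` and, because `PY < PZ`, in `ζ`. For fixed `μ` it
is therefore weakest at the largest values allowed, `ν = D` and `ζ = μ * (P + PY)`, where it becomes
the claimed bound. So `ν` and `ζ` can be eliminated while keeping `μ' = μ`.
-/

section OrderedField

variable {F : Type*} [Field F] [LinearOrder F] [IsStrictOrderedRing F]

theorem monotoneOn_one_div_one_add_div {d : F} (hd : 0 ≤ d) :
    MonotoneOn (fun x : F ↦ 1 / (1 + d / x)) (Set.Ioi 0) := by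
  intro x (hx : 0 < x) y (hy : 0 < y) hxy
  have hle : d / y ≤ d / x := div_le_div_of_nonneg_left hd hx hxy
  have hpos : 0 < 1 + d / y := by positivity
  exact one_div_le_one_div_of_le hpos (by gcongr)

theorem div_mul_one_div_one_add_div_le_of_le {c d μ ν D ζ ζ' : F} (hc : 0 ≤ c) (hd : 0 ≤ d)
    (hμ : 0 ≤ μ) (hD : 0 ≤ D) (hν : ν ≤ D) (hζ : 0 < ζ) (hζ' : ζ ≤ ζ') :
    ν / μ * c * (1 / (1 + d / ζ)) ≤ D / μ * c * (1 / (1 + d / ζ')) := by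
  have hmono : 1 / (1 + d / ζ) ≤ 1 / (1 + d / ζ') :=
    monotoneOn_one_div_one_add_div hd hζ (hζ.trans_le hζ') hζ'
  gcongr

end OrderedField

theorem div_mul_div_mul_one_div_one_add_sub_div_eq {F : Type*} [Field F] {P PY PZ μ : F} (D : F)
    (hPY : PY ≠ 0) (hPZ : PZ ≠ 0) (hμ : μ ≠ 0) (hP : P + PY ≠ 0) :
    D / μ * (PZ / PY) * (1 / (1 + (PZ - PY) / (μ * (P + PY)))) =
      D * (1 + P / PY) / (1 + μ * P / PZ - (1 - μ) * PY / PZ) := by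
  have hleft : 1 + (PZ - PY) / (μ * (P + PY)) =
      (PZ - PY + μ * (P + PY)) / (μ * (P + PY)) := by
    field_simp
    ring
  have hright : 1 + μ * P / PZ - (1 - μ) * PY / PZ = (PZ - PY + μ * (P + PY)) / PZ := by
    field_simp
    ring
  have hgain : 1 + P / PY = (P + PY) / PY := by
    field_simp
    ring
  rw [hleft, hright, hgain, one_div_div, div_div_eq_mul_div]
  field_simp

/-- **Parameter elimination in the converse for the Gaussian digital region without side
information at Bob** (Fourier–Motzkin elimination step): from the existence of `ν, μ, ζ`
satisfying the listed inequalities, one obtains a single parameter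
`μ' ∈ [1/(1+P/P_Y), 1]` satisfying the three stated inequalities. -/
theorem gaussian_digital_parameter_elimination (P PY PZ PE D DE : ℝ)
    (hP : 0 < P) (hPY : 0 < PY) (hPZ : 0 < PZ) (hPE : 0 < PE) (hYZ : PY < PZ)
    (h : ∃ ν μ ζ : ℝ,
      ν ≤ μ ∧ μ ≤ 1 ∧
      1 / (1 + P / PY) ≤ ν ∧
      PY ≤ ζ ∧ ζ ≤ μ * (P + PY) ∧
      ν ≤ D ∧
      DE ≤ 1 / (1 / μ + 1 / PE) ∧
      DE ≤ (1 / (1 / μ + 1 / PE)) * (ν / μ) * (PZ / PY) * (1 / (1 + (PZ - PY) / ζ))) :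
    ∃ μ' : ℝ, μ' ∈ Set.Icc (1 / (1 + P / PY)) 1 ∧
      1 / (1 + P / PY) ≤ D ∧
      DE ≤ 1 / (1 / μ' + 1 / PE) ∧
      DE ≤ (1 / (1 / μ' + 1 / PE)) * D * (1 + P / PY)
            / (1 + μ' * P / PZ - (1 - μ') * PY / PZ) := by
  obtain ⟨ν, μ, ζ, hνμ, hμ1, hν, hζ, hζμ, hνD, hDE, hDE'⟩ := h
  have hν0 : 0 < ν := lt_of_lt_of_le (by positivity) hν
  have hμ0 : 0 < μ := hν0.trans_le hνμ
  refine ⟨μ, ⟨hν.trans hνμ, hμ1⟩, hν.trans hνD, hDE, ?_⟩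
  have hK : 0 ≤ 1 / (1 / μ + 1 / PE) := by positivity
  calc
    DE ≤ 1 / (1 / μ + 1 / PE) * (ν / μ * (PZ / PY) * (1 / (1 + (PZ - PY) / ζ))) := by
      simpa only [mul_assoc] using hDE'
    _ ≤ 1 / (1 / μ + 1 / PE) *
        (D / μ * (PZ / PY) * (1 / (1 + (PZ - PY) / (μ * (P + PY))))) :=
      mul_le_mul_of_nonneg_left
        (div_mul_one_div_one_add_div_le_of_le (div_pos hPZ hPY).le (sub_pos.mpr hYZ).le hμ0.le
          (hν0.le.trans hνD) hνD (hPY.trans_le hζ) hζμ) hK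
    _ = 1 / (1 / μ + 1 / PE) * D * (1 + P / PY) /
        (1 + μ * P / PZ - (1 - μ) * PY / PZ) := by
      rw [div_mul_div_mul_one_div_one_add_sub_div_eq D hPY.ne' hPZ.ne' hμ0.ne'
        (add_pos hP hPY).ne', ← mul_div_assoc, ← mul_assoc]
end
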